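/- Let 𝒬 be the set of odd primes p such that the Diophantine equation 8x^2 + 27y^2 = jp has a primitive solution for some j ∈ {1, 4, 8}. Then the Dirichlet density of 𝒬 equals 1/6; that is, the ratio (∑_{p ∈ 𝒬} p^{−s}) / (∑_{p prime} p^{−s}) tends to 1/6 as s tends to 1 from the right. -/

import Mathlib

open Filter Topology

/-- The set 𝒬 of odd primes `p` such that `8x² + 27y² = jp` has a primitive
solution for some `j ∈ {1, 4, 8}`. -/
def QSet : Set ℕ :=
  {p | p.Prime ∧ Odd p ∧ ∃ j ∈ ({1, 4, 8} : Set ℤ), ∃ x y : ℤ,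
    8 * x ^ 2 + 27 * y ^ 2 = j * p ∧ Int.gcd x y = 1}

open Filter Topology

/-- Multiplicative functions supported on integers prime to 6, bounded by the divisor function. -/
structure Good (f : ℕ → ℝ) : Prop where
  zero : f 0 = 0
  one : f 1 = 1
  mul : ∀ m n : ℕ, Nat.Coprime m n → f (m * n) = f m * f n
  two : ∀ k : ℕ, 1 ≤ k → f (2 ^ k) = 0
  three : ∀ k : ℕ, 1 ≤ k → f (3 ^ k) = 0
  bd : ∀ p k : ℕ, p.Prime → |f (p ^ k)| ≤ k + 1

noncomputable def FF (f : ℕ → ℝ) (s : ℝ) : ℝ := ∑' n : ℕ, f n * (n : ℝ) ^ (-s)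

lemma Good.le_div {f : ℕ → ℝ} (hf : Good f) (n : ℕ) : |f n| ≤ (n.divisors.card : ℝ) := by
  induction n using Nat.recOnPosPrimePosCoprime with
  | prime_pow p n hp hn =>
    refine (hf.bd p n hp).trans ?_
    rw [Nat.divisors_prime_pow hp]; simp
  | zero => simp [hf.zero]
  | one => simp [hf.one]
  | coprime a b ha hb hab iha ihb =>
    rw [hf.mul a b hab, abs_mul, hab.card_divisors_mul]
    push_cast
    gcongr

lemma summable_div {s : ℝ} (hs : 1 < s) :
    Summable (fun n : ℕ => (n.divisors.card : ℝ) * (n : ℝ) ^ (-s)) := by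
  have h1 : LSeriesSummable (fun n => ((ArithmeticFunction.zeta : ArithmeticFunction ℂ) : ArithmeticFunction ℂ) n) (s:ℂ) :=
    ArithmeticFunction.LSeriesSummable_zeta_iff.mpr (by simpa using hs)
  have h2 := (ArithmeticFunction.LSeriesSummable_mul h1 h1).norm
  refine h2.congr fun n => ?_
  rw [LSeries.norm_term_eq]
  split_ifs with h
  · simp [h]
  · rw [ArithmeticFunction.coe_zeta_mul_apply]
    have : ∑ i ∈ n.divisors, ((ArithmeticFunction.zeta : ArithmeticFunction ℂ) : ArithmeticFunction ℂ) i = (n.divisors.card : ℂ) := by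
      rw [Finset.card_eq_sum_ones]
      push_cast
      refine Finset.sum_congr rfl fun i hi => ?_
      have := Nat.pos_of_mem_divisors hi
      simp [ArithmeticFunction.zeta_apply, this.ne']
    rw [this, Real.rpow_neg (by positivity)]
    simp [div_eq_mul_inv]

lemma Good.summable {f : ℕ → ℝ} (hf : Good f) {s : ℝ} (hs : 1 < s) :
    Summable (fun n : ℕ => ‖f n * (n : ℝ) ^ (-s)‖) := by
  refine (summable_div hs).of_nonneg_of_le (fun _ => norm_nonneg _) fun n => ?_
  rw [norm_mul, Real.norm_eq_abs, Real.norm_eq_abs, abs_of_nonneg (a := (n:ℝ)^(-s)) (by positivity)]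
  gcongr
  exact hf.le_div n

/-- bound for one Euler factor -/
lemma factor_bound (g : ℕ → ℝ) (g0 : g 0 = 1) (hg : ∀ k : ℕ, |g k| ≤ k + 1) (x : ℝ) (hx : 0 ≤ x)
    (hx5 : x ≤ 1 / 5) :
    0 < ∑' k, g k * x ^ k ∧ |Real.log (∑' k, g k * x ^ k) - g 1 * x| ≤ 28 * x ^ 2 := by
  have hx1 : ‖x‖ < 1 := by rw [Real.norm_eq_abs, abs_of_nonneg hx]; linarith
  have hch := hasSum_choose_mul_geometric_of_norm_lt_one 1 hx1
  have hch : HasSum (fun k : ℕ => ((k:ℝ)+1) * x ^ k) (1 / (1 - x) ^ 2) := by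
    simpa using hch
  have hnorm : ∀ k, ‖g k * x ^ k‖ ≤ ((k:ℝ)+1) * x ^ k := fun k => by
    rw [norm_mul, Real.norm_eq_abs, Real.norm_eq_abs, abs_of_nonneg (a := x ^ k) (by positivity)]
    gcongr
    exact hg k
  have hs : Summable (fun k => g k * x ^ k) :=
    Summable.of_norm_bounded hch.summable hnorm
  have hR := hs.sum_add_tsum_nat_add 2
  have hR2 := hch.summable.sum_add_tsum_nat_add 2
  rw [hch.tsum_eq] at hR2
  simp only [Finset.sum_range_succ, Finset.sum_range_zero, g0] at hR hR2
  set S := ∑' k, g k * x ^ k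
  set R := ∑' k, g (k + 2) * x ^ (k + 2)
  set R2 := ∑' k : ℕ, (((k + 2 : ℕ) : ℝ) + 1) * x ^ (k + 2)
  have hRle : |R| ≤ R2 := by
    rw [← Real.norm_eq_abs]
    exact tsum_of_norm_bounded (((summable_nat_add_iff 2).2 hch.summable).hasSum) fun k => hnorm (k+2)
  have hR2le : R2 ≤ 5 * x ^ 2 := by
    have h1 : R2 = 1 / (1 - x) ^ 2 - 1 - 2 * x := by
      have := hR2; norm_num at this; linarith
    rw [h1, sub_sub, sub_le_iff_le_add, div_le_iff₀ (by nlinarith)]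
    nlinarith [mul_nonneg hx hx, mul_nonneg (mul_nonneg hx hx) hx, mul_nonneg (mul_nonneg (mul_nonneg hx hx) hx) hx, mul_nonneg (mul_nonneg hx hx) (sub_nonneg.2 hx5)]
  have hg1 : |g 1| ≤ 2 := by have := hg 1; norm_num at this; linarith
  have hSe : S = 1 + (g 1 * x + R) := by
    rw [← hR]; ring
  have hz : |g 1 * x + R| ≤ 3 * x := by
    have : |g 1 * x| ≤ 2 * x := by rw [abs_mul, abs_of_nonneg hx]; gcongr
    have h3 := abs_add_le (g 1 * x) R
    nlinarith
  have hz2 : |-(g 1 * x + R)| < 1 := by rw [abs_neg]; linarith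
  have hlog := Real.abs_log_sub_add_sum_range_le hz2 1
  have hpos : 0 < S := by
    have := abs_le.1 hz
    rw [hSe]; linarith
  refine ⟨hpos, ?_⟩
  simp only [Finset.sum_range_succ, Finset.sum_range_zero, abs_neg, sub_neg_eq_add, ← hSe] at hlog
  have h5 : |g 1 * x + R| ^ 2 / (1 - |g 1 * x + R|) ≤ 45 / 2 * x ^ 2 := by
    rw [div_le_iff₀ (by linarith)]
    have h0 := abs_nonneg (g 1 * x + R)
    nlinarith [mul_nonneg hx hx, mul_le_mul hz hz h0 (by linarith)]
  norm_num at hlog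
  have h6 : Real.log S - g 1 * x = (-R + -(g 1 * x) + Real.log S) + R := by ring
  rw [h6]
  refine (abs_add_le _ _).trans ?_
  rw [← sq_abs (g 1 * x + R)] at hlog
  nlinarith [mul_nonneg hx hx]

lemma Good.log {f : ℕ → ℝ} (hf : Good f) : ∃ C : ℝ, ∀ s : ℝ, 1 < s → 0 < FF f s ∧
    |Real.log (FF f s) - ∑' p : Nat.Primes, f p * (p : ℝ) ^ (-s)| ≤ C := by
  have hsq : Summable (fun p : Nat.Primes => 28 * ((p : ℕ) : ℝ) ^ (-2 : ℝ)) :=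
    ((Real.summable_nat_rpow.2 (by norm_num)).comp_injective Subtype.val_injective).mul_left 28
  refine ⟨∑' p : Nat.Primes, 28 * ((p : ℕ) : ℝ) ^ (-2 : ℝ), fun s hs => ?_⟩
  have hsum := hf.summable hs
  have hprod := EulerProduct.eulerProduct_hasProd (f := fun n : ℕ => f n * (n : ℝ) ^ (-s))
    (by simp [hf.one]) (fun {m n} h => by
      simp only [hf.mul m n h]; push_cast
      rw [Real.mul_rpow (by positivity) (by positivity)]; ring) hsum (by simp [hf.zero])
  change HasProd _ (FF f s) at hprod
  have hE : ∀ p : Nat.Primes, (∑' e : ℕ, f ((p:ℕ) ^ e) * (((p:ℕ) ^ e : ℕ) : ℝ) ^ (-s)) =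
      ∑' e : ℕ, f ((p:ℕ) ^ e) * (((p:ℕ) : ℝ) ^ (-s)) ^ e := fun p => by
    refine tsum_congr fun e => ?_
    push_cast
    rw [← Real.rpow_natCast, ← Real.rpow_natCast, ← Real.rpow_mul (by positivity),
      ← Real.rpow_mul (by positivity), mul_comm (e : ℝ)]
  have key : ∀ p : Nat.Primes, 0 < (∑' e : ℕ, f ((p:ℕ) ^ e) * (((p:ℕ) ^ e : ℕ) : ℝ) ^ (-s)) ∧
      |Real.log (∑' e : ℕ, f ((p:ℕ) ^ e) * (((p:ℕ) ^ e : ℕ) : ℝ) ^ (-s)) - f p * (p : ℝ) ^ (-s)|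
        ≤ 28 * ((p : ℕ) : ℝ) ^ (-2 : ℝ) := fun p => by
    rw [hE p]
    have hp1 : (1 : ℝ) < (p : ℕ) := by exact_mod_cast p.2.one_lt
    by_cases h5 : 5 ≤ (p : ℕ)
    · have h5' : (5 : ℝ) ≤ (p : ℕ) := by exact_mod_cast h5
      have hx5 : ((p : ℕ) : ℝ) ^ (-s) ≤ 1 / 5 := by
        calc ((p : ℕ) : ℝ) ^ (-s) ≤ ((p : ℕ) : ℝ) ^ (-1 : ℝ) :=
              Real.rpow_le_rpow_of_exponent_le hp1.le (by linarith)
          _ = 1 / ((p : ℕ) : ℝ) := by rw [Real.rpow_neg_one]; simp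
          _ ≤ 1 / 5 := by gcongr
      have := factor_bound (fun k => f ((p:ℕ) ^ k)) (by simp [hf.one]) (fun k => hf.bd p k p.2)
        (((p : ℕ) : ℝ) ^ (-s)) (by positivity) hx5
      refine ⟨this.1, ?_⟩
      have h2 := this.2
      simp only [pow_one] at h2
      refine h2.trans ?_
      rw [← Real.rpow_natCast, ← Real.rpow_mul (by positivity)]
      gcongr 28 * ?_
      exact Real.rpow_le_rpow_of_exponent_le hp1.le (by push_cast; linarith)
    · have hz : ∀ k : ℕ, 1 ≤ k → f ((p : ℕ) ^ k) = 0 := by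
        have h2 := p.2.two_le
        have : (p : ℕ) = 2 ∨ (p : ℕ) = 3 ∨ (p : ℕ) = 4 := by omega
        rcases this with h | h | h
        · rw [h]; exact hf.two
        · rw [h]; exact hf.three
        · exfalso; have := p.2; rw [h] at this; revert this; decide
      have h1 : f (p : ℕ) = 0 := by simpa using hz 1 le_rfl
      have h2 : (∑' e : ℕ, f ((p:ℕ) ^ e) * (((p:ℕ) : ℝ) ^ (-s)) ^ e) = 1 := by
        rw [tsum_eq_single 0]
        · simp [hf.one]
        · intro k hk
          rw [hz k (by omega), zero_mul]
      rw [h2, h1]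
      simp
  set E : Nat.Primes → ℝ := fun p => ∑' e : ℕ, f ((p:ℕ) ^ e) * (((p:ℕ) ^ e : ℕ) : ℝ) ^ (-s)
  have hs1 : Summable (fun p : Nat.Primes => f p * (p : ℝ) ^ (-s)) :=
    (hsum.of_norm).comp_injective (i := fun p : Nat.Primes => (p : ℕ)) Subtype.val_injective
  have hs2 : Summable (fun p : Nat.Primes => Real.log (E p) - f p * (p : ℝ) ^ (-s)) :=
    Summable.of_norm_bounded hsq fun p => (key p).2
  have hs3 : Summable (fun p : Nat.Primes => Real.log (E p)) := by
    simpa using hs2.add hs1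
  have h4 := hs3.hasSum.rexp
  have h5 : Real.exp ∘ (fun p : Nat.Primes => Real.log (E p)) = E := by
    funext p; exact Real.exp_log (key p).1
  rw [h5] at h4
  have h6 : FF f s = Real.exp (∑' p : Nat.Primes, Real.log (E p)) := hprod.unique h4
  rw [h6]
  refine ⟨Real.exp_pos _, ?_⟩
  rw [Real.log_exp, ← hs3.tsum_sub hs1, ← Real.norm_eq_abs]
  exact tsum_of_norm_bounded hsq.hasSum fun p => (key p).2

lemma lip (f : ℕ → ℝ) (f0 : f 0 = 0)
    (hsum : ∀ s : ℝ, 1 < s → Summable (fun n : ℕ => ‖f n * (n : ℝ) ^ (-s)‖))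
    (C : ℝ) (hC : 0 ≤ C) (hA : ∀ n : ℕ, |∑ k ∈ Finset.Icc 1 n, f k| ≤ C * (n : ℝ) ^ (1 / 2 : ℝ)) :
    ∃ l K : ℝ, ∀ s : ℝ, 1 < s → s < 2 → |FF f s - l| ≤ K * (s - 1) := by
  set A : ℝ → ℝ := fun t => ∑ k ∈ Finset.Icc 1 ⌊t⌋₊, f k with hAdef
  have hAm : Measurable A :=
    (measurable_from_top (f := fun n : ℕ => ∑ k ∈ Finset.Icc 1 n, f k)).comp Nat.measurable_floor
  have hAb : ∀ t : ℝ, 1 < t → |A t| ≤ C * t ^ (1 / 2 : ℝ) := fun t ht => by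
    refine (hA _).trans ?_
    gcongr
    exact Nat.floor_le (by linarith)
  -- integrability
  have h_integrable : ∀ s : ℝ, 1 ≤ s → MeasureTheory.IntegrableOn (fun t => A t * t ^ (-(s + 1))) (Set.Ioi 1) := by
    intro s hs
    have h1 : MeasureTheory.IntegrableOn (fun t : ℝ => C * t ^ (-(3/2) : ℝ)) (Set.Ioi 1) :=
      (integrableOn_Ioi_rpow_of_lt (by norm_num) one_pos).const_mul C
    refine MeasureTheory.Integrable.mono' h1 ?_ ?_
    · exact (hAm.mul (measurable_id.pow_const _)).aestronglyMeasurable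
    · filter_upwards [MeasureTheory.self_mem_ae_restrict measurableSet_Ioi] with t ht
      have ht : 1 < t := ht
      have ht0 : 0 < t := by linarith
      rw [norm_mul, Real.norm_eq_abs, Real.norm_eq_abs, abs_of_nonneg (a := t ^ (-(s + 1))) (by positivity)]
      calc |A t| * t ^ (-(s + 1)) ≤ (C * t ^ (1 / 2 : ℝ)) * t ^ (-(2 : ℝ)) := by
            gcongr
            · exact hAb t ht
            · exact ht.le
            · linarith
        _ = C * t ^ (-(3/2) : ℝ) := by
            rw [mul_assoc, ← Real.rpow_add ht0]; norm_num
  set G : ℝ → ℝ := fun s => ∫ t in Set.Ioi (1 : ℝ), A t * t ^ (-(s + 1)) with hG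
  have hFG : ∀ s : ℝ, 1 < s → FF f s = s * G s := by
    intro s hs
    have hterm : ∀ n : ℕ, LSeries.term (fun n => (f n : ℂ)) s n = ((f n * (n : ℝ) ^ (-s) : ℝ) : ℂ) := by
      intro n
      rw [LSeries.term_def₀ (by simp [f0])]
      push_cast
      rw [Complex.ofReal_cpow (by positivity)]
      simp
    have hS : LSeriesSummable (fun n => (f n : ℂ)) s := by
      unfold LSeriesSummable
      rw [summable_congr hterm]
      exact Complex.ofRealCLM.summable (hsum s hs).of_norm
    have hO : (fun n : ℕ ↦ ∑ k ∈ Finset.Icc 1 n, (f k : ℂ)) =O[atTop] fun n ↦ (n : ℝ) ^ (1 / 2 : ℝ) := by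
      refine Asymptotics.IsBigO.of_bound C (Eventually.of_forall fun n => ?_)
      rw [← Complex.ofReal_sum, Complex.norm_real, Real.norm_eq_abs, Real.norm_eq_abs,
        abs_of_nonneg (a := (n : ℝ) ^ (1 / 2 : ℝ)) (by positivity)]
      exact hA n
    have := LSeries_eq_mul_integral (fun n => (f n : ℂ)) (r := 1 / 2) (by norm_num) (s := s)
      (by simp only [Complex.ofReal_re]; linarith) hS hO
    have h1 : LSeries (fun n => (f n : ℂ)) s = (FF f s : ℂ) := by
      unfold LSeries FF
      rw [tsum_congr hterm, Complex.ofReal_tsum]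
    have h2 : (∫ t in Set.Ioi (1 : ℝ), (∑ k ∈ Finset.Icc 1 ⌊t⌋₊, (f k : ℂ)) * (t : ℂ) ^ (-((s : ℂ) + 1)))
        = (G s : ℂ) := by
      rw [hG]
      simp only
      rw [← integral_complex_ofReal]
      refine MeasureTheory.setIntegral_congr_fun measurableSet_Ioi fun t ht => ?_
      have ht : 1 < t := ht
      simp only [hAdef]
      push_cast
      rw [Complex.ofReal_cpow (by linarith)]
      push_cast
      rfl
    rw [h1, h2] at this
    exact_mod_cast this
  -- Lipschitz
  set K1 : ℝ := ∫ t in Set.Ioi (1 : ℝ), (4 * C) * t ^ (-(5/4) : ℝ) with hK1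
  have hKint : MeasureTheory.IntegrableOn (fun t : ℝ => (4 * C) * t ^ (-(5/4) : ℝ)) (Set.Ioi 1) :=
    (integrableOn_Ioi_rpow_of_lt (by norm_num) one_pos).const_mul (4 * C)
  have hL : ∀ s : ℝ, 1 < s → |G s - G 1| ≤ K1 * (s - 1) := by
    intro s hs
    rw [hG]
    simp only
    rw [← MeasureTheory.integral_sub (h_integrable s hs.le) (h_integrable 1 le_rfl), hK1, ← MeasureTheory.integral_mul_const,
      ← Real.norm_eq_abs]
    refine MeasureTheory.norm_integral_le_of_norm_le (hKint.mul_const _) ?_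
    filter_upwards [MeasureTheory.self_mem_ae_restrict measurableSet_Ioi] with t ht
    have ht : 1 < t := ht
    have ht0 : 0 < t := by linarith
    have e1 : A t * t ^ (-(s + 1)) - A t * t ^ (-((1:ℝ) + 1)) = -(A t * (t ^ (-(2 : ℝ)) * (1 - t ^ (-(s - 1))))) := by
      have : t ^ (-(s + 1)) = t ^ (-(2 : ℝ)) * t ^ (-(s - 1)) := by
        rw [← Real.rpow_add ht0]; congr 1; ring
      rw [this]; norm_num; ring
    have e2 : 1 - t ^ (-(s - 1)) ≤ (s - 1) * (4 * t ^ (1 / 4 : ℝ)) := by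
      have h1 : Real.log t ≤ 4 * t ^ (1 / 4 : ℝ) := by
        have := Real.log_le_rpow_div (x := t) ht0.le (ε := 1/4) (by norm_num)
        linarith
      have h2 : -(s - 1) * Real.log t + 1 ≤ t ^ (-(s - 1)) := by
        rw [Real.rpow_def_of_pos ht0, mul_comm (Real.log t)]
        exact Real.add_one_le_exp _
      nlinarith
    have e3 : 0 ≤ 1 - t ^ (-(s - 1)) := by
      have := Real.rpow_le_one_of_one_le_of_nonpos ht.le (z := -(s - 1)) (by linarith)
      linarith
    rw [e1, norm_neg, norm_mul, norm_mul, Real.norm_eq_abs, Real.norm_eq_abs, Real.norm_eq_abs,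
      abs_of_nonneg e3, abs_of_nonneg (a := t ^ (-(2:ℝ))) (by positivity)]
    calc |A t| * (t ^ (-(2:ℝ)) * (1 - t ^ (-(s - 1))))
        ≤ (C * t ^ (1 / 2 : ℝ)) * (t ^ (-(2:ℝ)) * ((s - 1) * (4 * t ^ (1 / 4 : ℝ)))) := by
          gcongr
          exact hAb t ht
      _ = 4 * C * (t ^ (1 / 2 : ℝ) * t ^ (-(2:ℝ)) * t ^ (1 / 4 : ℝ)) * (s - 1) := by ring
      _ = 4 * C * t ^ (-(5/4) : ℝ) * (s - 1) := by
          rw [← Real.rpow_add ht0, ← Real.rpow_add ht0]; norm_num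
  have hK1n : 0 ≤ K1 := by
    have := (abs_nonneg _).trans (hL 2 (by norm_num)); linarith
  refine ⟨G 1, 2 * K1 + |G 1|, fun s hs hs2 => ?_⟩
  rw [hFG s hs]
  have e : s * G s - G 1 = s * (G s - G 1) + (s - 1) * G 1 := by ring
  rw [e]
  refine (abs_add_le _ _).trans ?_
  rw [abs_mul, abs_mul, abs_of_pos (by linarith : 0 < s), abs_of_pos (by linarith : 0 < s - 1)]
  have := hL s hs
  nlinarith [mul_nonneg hK1n (by linarith : 0 ≤ s - 1), mul_le_mul hs2.le this (abs_nonneg _) (by norm_num)]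

lemma good_char (ψ : MulChar (ZMod 24) ℤ) (hψ : ∀ a, |ψ a| ≤ 1) : Good (fun n : ℕ => (ψ (n : ZMod 24) : ℝ)) where
  zero := by
    have : ψ (((0 : ℕ)) : ZMod 24) = 0 := ψ.map_nonunit (by decide)
    simp only [this]; simp
  one := by simp
  mul m n _ := by push_cast; rw [map_mul]; push_cast; ring
  two k hk := by
    have h : ψ (((2 : ℕ)) : ZMod 24) = 0 := ψ.map_nonunit (by decide)
    push_cast at h ⊢
    rw [map_pow, h, zero_pow (by omega)]; simp
  three k hk := by
    have h : ψ (((3 : ℕ)) : ZMod 24) = 0 := ψ.map_nonunit (by decide)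
    push_cast at h ⊢
    rw [map_pow, h, zero_pow (by omega)]; simp
  bd p k _ := by
    have : |(ψ ((p ^ k : ℕ) : ZMod 24) : ℝ)| ≤ 1 := by exact_mod_cast hψ _
    have h2 : (0:ℝ) ≤ k := by positivity
    linarith

lemma FF_char (ψ : MulChar (ZMod 24) ℤ) {s : ℝ} (hs : 1 < s) :
    (FF (fun n : ℕ => (ψ (n : ZMod 24) : ℝ)) s : ℂ) =
      DirichletCharacter.LFunction (ψ.ringHomComp (Int.castRingHom ℂ) : DirichletCharacter ℂ 24) s := by
  rw [DirichletCharacter.LFunction_eq_LSeries _ (by simpa using hs)]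
  unfold FF LSeries
  rw [Complex.ofReal_tsum]
  refine tsum_congr fun n => ?_
  have h0 : ψ (0 : ZMod 24) = 0 := ψ.map_nonunit (by decide)
  rw [LSeries.term_def₀ (by simp [MulChar.ringHomComp_apply, h0])]
  push_cast
  rw [Complex.ofReal_cpow (by positivity)]
  simp [MulChar.ringHomComp_apply]

def tab24 (a : ZMod 24) : ℤ :=
  if a = 1 ∨ a = 5 ∨ a = 7 ∨ a = 11 then 1 else
    if a = 13 ∨ a = 17 ∨ a = 19 ∨ a = 23 then -1 else 0

def psi24 : MulChar (ZMod 24) ℤ where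
  toFun := tab24
  map_one' := by decide
  map_mul' := by decide
  map_nonunit' := by decide

lemma psi24_apply (a : ZMod 24) : psi24 a = tab24 a := rfl

lemma psi24_log : ∃ C : ℝ, ∀ᶠ s in 𝓝[>] (1 : ℝ), |Real.log (FF (fun n : ℕ => (psi24 (n : ZMod 24) : ℝ)) s)| ≤ C := by
  set χ : DirichletCharacter ℂ 24 := psi24.ringHomComp (Int.castRingHom ℂ) with hχ
  have hne : χ ≠ 1 := by
    intro h
    have h1 : χ (13 : ZMod 24) = (1 : DirichletCharacter ℂ 24) (13 : ZMod 24) := by rw [h]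
    rw [MulChar.one_apply (by decide), hχ, MulChar.ringHomComp_apply, psi24_apply,
      show tab24 13 = -1 by decide] at h1
    norm_num at h1
  have hL := DirichletCharacter.LFunction_apply_one_ne_zero hne
  have hcont : Continuous (DirichletCharacter.LFunction χ) :=
    (DirichletCharacter.differentiable_LFunction hne).continuous
  have ht : Tendsto (fun s : ℝ => Real.log ‖DirichletCharacter.LFunction χ (s : ℂ)‖) (𝓝[>] (1 : ℝ))
      (𝓝 (Real.log ‖DirichletCharacter.LFunction χ ((1 : ℝ) : ℂ)‖)) := by
    refine tendsto_nhdsWithin_of_tendsto_nhds ?_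
    refine Tendsto.log ?_ (by simpa using hL)
    exact ((hcont.comp Complex.continuous_ofReal).norm).tendsto 1
  refine ⟨|Real.log ‖DirichletCharacter.LFunction χ ((1 : ℝ) : ℂ)‖| + 1, ?_⟩
  filter_upwards [ht.abs.eventually_le_const (lt_add_one _), self_mem_nhdsWithin] with s h1 h2
  rw [← FF_char psi24 h2, Complex.norm_real, Real.norm_eq_abs, Real.log_abs] at h1
  exact h1

lemma one24_log : ∃ C : ℝ, ∀ᶠ s in 𝓝[>] (1 : ℝ),
    |Real.log (FF (fun n : ℕ => ((1 : MulChar (ZMod 24) ℤ) (n : ZMod 24) : ℝ)) s) + Real.log (s - 1)| ≤ C := by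
  have h1 : ((1 : MulChar (ZMod 24) ℤ).ringHomComp (Int.castRingHom ℂ) : DirichletCharacter ℂ 24) = 1 := by
    ext a
    simp [MulChar.one_apply]
  have hres := DirichletCharacter.LFunctionTrivChar_residue_one (N := 24)
  set c : ℂ := ∏ p ∈ Nat.primeFactors 24, (1 - (p : ℂ)⁻¹) with hc
  have hc0 : c ≠ 0 := by
    rw [hc, Finset.prod_ne_zero_iff]
    intro p hp h
    have hp1 := (Nat.prime_of_mem_primeFactors hp).one_lt
    have : (p : ℂ) = 1 := by
      rw [sub_eq_zero] at h
      exact (inv_eq_one.1 h.symm)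
    have : p = 1 := by exact_mod_cast this
    omega
  have hto : Tendsto (fun s : ℝ => (s : ℂ)) (𝓝[>] (1 : ℝ)) (𝓝[≠] (1 : ℂ)) := by
    refine tendsto_nhdsWithin_of_tendsto_nhds_of_eventually_within _ ?_ ?_
    · refine tendsto_nhdsWithin_of_tendsto_nhds ?_
      exact Complex.continuous_ofReal.tendsto' 1 1 (by simp)
    · filter_upwards [self_mem_nhdsWithin] with s hs
      have hs : 1 < s := hs
      simp only [Set.mem_compl_iff, Set.mem_singleton_iff]
      intro h
      have : s = 1 := by exact_mod_cast h
      linarith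
  have ht := ((hres.comp hto).norm).log (by simpa using hc0)
  refine ⟨|Real.log ‖c‖| + 1, ?_⟩
  filter_upwards [ht.abs.eventually_le_const (lt_add_one _), self_mem_nhdsWithin] with s h2 h3
  have h3 : 1 < s := h3
  obtain ⟨_, hC⟩ := (good_char 1 (fun a => by
    by_cases h : IsUnit a
    · simp [MulChar.one_apply h]
    · simp [MulChar.map_nonunit _ h])).log
  have hpos := (hC s h3).1
  simp only [Function.comp_apply] at h2
  rw [DirichletCharacter.LFunctionTrivChar, ← h1, ← FF_char 1 h3, norm_mul, Complex.norm_real, Real.norm_eq_abs, abs_of_pos hpos,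
    ← Complex.ofReal_one, ← Complex.ofReal_sub, Complex.norm_real, Real.norm_eq_abs, abs_of_pos (a := s - 1) (by linarith),
    Real.log_mul (by linarith) hpos.ne'] at h2
  rw [add_comm]; exact h2

/-- Homogeneous elements of `ℤ[√2, √-3]`: `x + y√-6` (`d = false`) or `x√2 + y√-3` (`d = true`). -/
@[ext] structure El where
  d : Bool
  x : ℤ
  y : ℤ

instance : DecidableEq El := fun _ _ => decidable_of_iff _ El.ext_iff.symm

namespace El

def mul : El → El → El
  | ⟨false, x, y⟩, ⟨false, u, v⟩ => ⟨false, x * u - 6 * (y * v), x * v + u * y⟩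
  | ⟨false, x, y⟩, ⟨true, u, v⟩ => ⟨true, x * u - 3 * (y * v), x * v + 2 * (u * y)⟩
  | ⟨true, x, y⟩, ⟨false, u, v⟩ => ⟨true, x * u - 3 * (y * v), u * y + 2 * (x * v)⟩
  | ⟨true, x, y⟩, ⟨true, u, v⟩ => ⟨false, 2 * (x * u) - 3 * (y * v), x * v + u * y⟩

instance : Mul El := ⟨mul⟩
instance : One El := ⟨⟨false, 1, 0⟩⟩

@[simp] lemma mul_ff (x y u v : ℤ) : (⟨false, x, y⟩ : El) * ⟨false, u, v⟩ = ⟨false, x * u - 6 * (y * v), x * v + u * y⟩ := rfl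
@[simp] lemma mul_ft (x y u v : ℤ) : (⟨false, x, y⟩ : El) * ⟨true, u, v⟩ = ⟨true, x * u - 3 * (y * v), x * v + 2 * (u * y)⟩ := rfl
@[simp] lemma mul_tf (x y u v : ℤ) : (⟨true, x, y⟩ : El) * ⟨false, u, v⟩ = ⟨true, x * u - 3 * (y * v), u * y + 2 * (x * v)⟩ := rfl
@[simp] lemma mul_tt (x y u v : ℤ) : (⟨true, x, y⟩ : El) * ⟨true, u, v⟩ = ⟨false, 2 * (x * u) - 3 * (y * v), x * v + u * y⟩ := rfl
lemma one_def : (1 : El) = ⟨false, 1, 0⟩ := rfl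

instance : CommMonoid El where
  mul_assoc := by
    rintro ⟨_ | _, x, y⟩ ⟨_ | _, u, v⟩ ⟨_ | _, z, w⟩ <;> simp <;> constructor <;> ring
  one_mul := by
    rintro ⟨_ | _, x, y⟩ <;> simp [one_def]
  mul_one := by
    rintro ⟨_ | _, x, y⟩ <;> simp [one_def]
  mul_comm := by
    rintro ⟨_ | _, x, y⟩ ⟨_ | _, u, v⟩ <;> simp <;> (try constructor) <;> ring

def N : El → ℤ
  | ⟨false, x, y⟩ => x ^ 2 + 6 * y ^ 2
  | ⟨true, x, y⟩ => 2 * x ^ 2 + 3 * y ^ 2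

@[simp] lemma N_f (x y : ℤ) : N ⟨false, x, y⟩ = x ^ 2 + 6 * y ^ 2 := rfl
@[simp] lemma N_t (x y : ℤ) : N ⟨true, x, y⟩ = 2 * x ^ 2 + 3 * y ^ 2 := rfl

def conj (a : El) : El := ⟨a.d, a.x, -a.y⟩
def sc (c : ℤ) (a : El) : El := ⟨a.d, c * a.x, c * a.y⟩

lemma N_mul (a b : El) : N (a * b) = N a * N b := by
  obtain ⟨_ | _, x, y⟩ := a <;> obtain ⟨_ | _, u, v⟩ := b <;> simp <;> ring

lemma N_conj (a : El) : N (conj a) = N a := by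
  obtain ⟨_ | _, x, y⟩ := a <;> simp [conj]

lemma N_sc (c : ℤ) (a : El) : N (sc c a) = c ^ 2 * N a := by
  obtain ⟨_ | _, x, y⟩ := a <;> simp [sc] <;> ring

lemma N_one : N 1 = 1 := by simp [one_def]

lemma mul_conj (a : El) : a * conj a = sc (N a) 1 := by
  obtain ⟨_ | _, x, y⟩ := a <;> simp [conj, sc, one_def] <;> (try constructor) <;> ring

lemma conj_conj (a : El) : conj (conj a) = a := by
  ext <;> simp [conj]

lemma sc_mul (c : ℤ) (a b : El) : sc c a * b = sc c (a * b) := by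
  obtain ⟨_ | _, x, y⟩ := a <;> obtain ⟨_ | _, u, v⟩ := b <;> simp [sc] <;> constructor <;> ring

lemma sc_sc (c e : ℤ) (a : El) : sc c (sc e a) = sc (c * e) a := by
  ext <;> simp [sc, mul_assoc]

lemma sc_one_mul (c : ℤ) (a : El) : sc c 1 * a = sc c a := by rw [sc_mul, one_mul]

lemma sc_inj {c : ℤ} (hc : c ≠ 0) {a b : El} (h : sc c a = sc c b) : a = b := by
  have h1 := congrArg El.d h
  have h2 := congrArg El.x h
  have h3 := congrArg El.y h
  simp only [sc] at h1 h2 h3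
  exact El.ext h1 (mul_left_cancel₀ hc h2) (mul_left_cancel₀ hc h3)

lemma sc_eq_one (a : El) : sc 1 a = a := by ext <;> simp [sc]

lemma cancel {a b c : El} (ha : N a ≠ 0) (h : a * b = a * c) : b = c := by
  have h2 : conj a * (a * b) = conj a * (a * c) := by rw [h]
  rw [← mul_assoc, ← mul_assoc, mul_comm (conj a), mul_conj, sc_one_mul, sc_one_mul] at h2
  exact sc_inj ha h2

lemma N_eq_one {a : El} (h : N a = 1) : a = 1 ∨ a = sc (-1) 1 := by
  obtain ⟨_ | _, x, y⟩ := a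
  · simp only [N_f] at h
    have hy : y = 0 := by
      by_contra hh
      nlinarith [Int.one_le_abs hh, sq_abs y, sq_nonneg x]
    subst hy
    have : (x - 1) * (x + 1) = 0 := by linarith
    rcases mul_eq_zero.1 this with h | h
    · left; ext <;> simp [one_def]; linarith
    · right; ext <;> simp [one_def, sc]; linarith
  · exfalso
    simp only [N_t] at h
    have hy : y = 0 := by
      by_contra hh
      nlinarith [Int.one_le_abs hh, sq_abs y, sq_nonneg x]
    subst hy
    omega

lemma N_nonneg (a : El) : 0 ≤ N a := by
  obtain ⟨_ | _, x, y⟩ := a <;> simp <;> positivity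

/-- reduction of binary forms of determinant 6 -/
lemma reduce : ∀ n : ℕ, ∀ a b c : ℤ, a.toNat = n → 0 < a → a * c - b ^ 2 = 6 →
    ∃ x y z w : ℤ, (a = x ^ 2 + 6 * y ^ 2 ∧ c = z ^ 2 + 6 * w ^ 2 ∧ b = x * z + 6 * (y * w)) ∨
      (a = 2 * x ^ 2 + 3 * y ^ 2 ∧ c = 2 * z ^ 2 + 3 * w ^ 2 ∧ b = 2 * (x * z) + 3 * (y * w)) := by
  intro n
  induction n using Nat.strong_induction_on with
  | _ n ih =>
  intro a b c hn ha h
  -- shift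
  obtain ⟨k, b', hb, hb1, hb2⟩ : ∃ k b' : ℤ, b = b' + k * a ∧ -a ≤ 2 * b' ∧ 2 * b' ≤ a := by
    refine ⟨(2 * b + a) / (2 * a), b - (2 * b + a) / (2 * a) * a, by ring, ?_, ?_⟩
    · have := Int.emod_nonneg (2 * b + a) (by omega : 2 * a ≠ 0)
      have h2 := Int.emod_add_mul_ediv (2 * b + a) (2 * a)
      nlinarith
    · have := Int.emod_lt_of_pos (2 * b + a) (by omega : 0 < 2 * a)
      have h2 := Int.emod_add_mul_ediv (2 * b + a) (2 * a)
      nlinarith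
  obtain ⟨c', hc⟩ : ∃ c', c = c' + 2 * k * b' + k ^ 2 * a := ⟨c - 2 * k * b' - k ^ 2 * a, by ring⟩
  have h' : a * c' - b' ^ 2 = 6 := by subst hb hc; linarith
  have hc' : 0 < c' := by
    by_contra! hh
    nlinarith [sq_nonneg b', mul_nonneg ha.le (neg_nonneg.2 hh)]
  have main : ∃ x y z w : ℤ, (a = x ^ 2 + 6 * y ^ 2 ∧ c' = z ^ 2 + 6 * w ^ 2 ∧ b' = x * z + 6 * (y * w)) ∨
      (a = 2 * x ^ 2 + 3 * y ^ 2 ∧ c' = 2 * z ^ 2 + 3 * w ^ 2 ∧ b' = 2 * (x * z) + 3 * (y * w)) := by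
    by_cases hlt : c' < a
    · obtain ⟨x, y, z, w, hh⟩ := ih c'.toNat (by omega) c' b' a rfl hc' (by linarith)
      refine ⟨z, w, x, y, ?_⟩
      rcases hh with ⟨h1, h2, h3⟩ | ⟨h1, h2, h3⟩
      · left; exact ⟨h2, h1, by linarith⟩
      · right; exact ⟨h2, h1, by linarith⟩
    · push Not at hlt
      have h4 : 4 * b' ^ 2 ≤ a ^ 2 := by nlinarith
      have ha2 : a ≤ 2 := by
        by_contra! hh
        nlinarith
      have : a = 1 ∨ a = 2 := by omega
      rcases this with rfl | rfl
      · have : b' = 0 := by omega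
        subst this
        exact ⟨1, 0, 0, 1, Or.inl ⟨by norm_num, by linarith, by norm_num⟩⟩
      · have : b' = 0 ∨ b' = 1 ∨ b' = -1 := by omega
        rcases this with rfl | rfl | rfl
        · exact ⟨1, 0, 0, 1, Or.inr ⟨by norm_num, by linarith, by norm_num⟩⟩
        · omega
        · omega
  obtain ⟨x, y, z, w, hh⟩ := main
  refine ⟨x, y, z + k * x, w + k * y, ?_⟩
  rcases hh with ⟨h1, h2, h3⟩ | ⟨h1, h2, h3⟩
  · left; refine ⟨h1, ?_, ?_⟩
    · rw [hc, h2, h3, h1]; ring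
    · rw [hb, h3, h1]; ring
  · right; refine ⟨h1, ?_, ?_⟩
    · rw [hc, h2, h3, h1]; ring
    · rw [hb, h3, h1]; ring

lemma exists_of_sq {p b : ℤ} (hp : 0 < p) (h : p ∣ b ^ 2 + 6) : ∃ a : El, N a = p := by
  obtain ⟨c, hc⟩ := h
  obtain ⟨x, y, z, w, h | h⟩ := reduce _ p b c rfl hp (by linarith)
  · exact ⟨⟨false, x, y⟩, by simp [h.1]⟩
  · exact ⟨⟨true, x, y⟩, by simp [h.1]⟩

lemma dvd_of_dvd_y {p : ℤ} (hp : Prime p) (h2 : ¬ p ∣ 2) {a : El} (h : p ∣ N a)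
    (hy : p ∣ a.y) : ∃ b, a = sc p b := by
  have hx : p ∣ a.x := by
    obtain ⟨_ | _, x, y⟩ := a
    · simp only [N_f] at h hy
      have : p ∣ x ^ 2 := by
        have h3 : p ∣ 6 * y ^ 2 := Dvd.dvd.mul_left (Dvd.dvd.pow hy two_ne_zero) 6
        exact (dvd_add_left h3).1 h
      exact hp.dvd_of_dvd_pow this
    · simp only [N_t] at h hy
      have : p ∣ 2 * x ^ 2 := by
        have h3 : p ∣ 3 * y ^ 2 := Dvd.dvd.mul_left (Dvd.dvd.pow hy two_ne_zero) 3
        exact (dvd_add_left h3).1 h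
      exact hp.dvd_of_dvd_pow ((hp.dvd_or_dvd this).resolve_left h2)
  obtain ⟨u, hu⟩ := hx
  obtain ⟨v, hv⟩ := hy
  exact ⟨⟨a.d, u, v⟩, by ext <;> simp [sc, hu, hv]⟩

lemma div_of_sc {p : ℤ} (hp0 : p ≠ 0) {π a b : El} (hπ : N π = p) (h : a * conj π = sc p b) :
    a = π * b := by
  have h2 : a * conj π * π = sc p b * π := by rw [h]
  rw [mul_assoc, mul_comm (conj π), mul_conj, hπ, sc_mul, mul_comm a, sc_one_mul] at h2
  rw [mul_comm]; exact sc_inj hp0 h2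

lemma div_prime {p : ℤ} (hp : Prime p) (h2 : ¬ p ∣ 2) {π a : El} (hπ : N π = p) (h : p ∣ N a) :
    ∃ b, a = π * b ∨ a = conj π * b := by
  have key : p ∣ (a * conj π).y * (a * π).y := by
    have hh : p ∣ N π := by rw [hπ]
    obtain ⟨_ | _, x, y⟩ := a <;> obtain ⟨_ | _, u, v⟩ := π <;> simp only [conj, N_f, N_t, mul_ff, mul_ft, mul_tf, mul_tt] at *
    · have e : (x * -v + u * y) * (x * v + u * y) = (u ^ 2 + 6 * v ^ 2) * y ^ 2 - (x ^ 2 + 6 * y ^ 2) * v ^ 2 := by ring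
      rw [e]; exact dvd_sub (hh.mul_right _) (h.mul_right _)
    · have e : (x * -v + 2 * (u * y)) * (x * v + 2 * (u * y)) = (2 * u ^ 2 + 3 * v ^ 2) * (2 * y ^ 2) - (x ^ 2 + 6 * y ^ 2) * v ^ 2 := by ring
      rw [e]; exact dvd_sub (hh.mul_right _) (h.mul_right _)
    · have e : (u * y + 2 * (x * -v)) * (u * y + 2 * (x * v)) = (u ^ 2 + 6 * v ^ 2) * y ^ 2 - (2 * x ^ 2 + 3 * y ^ 2) * (2 * v ^ 2) := by ring
      rw [e]; exact dvd_sub (hh.mul_right _) (h.mul_right _)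
    · have e : 2 * ((x * -v + u * y) * (x * v + u * y)) = (2 * u ^ 2 + 3 * v ^ 2) * y ^ 2 - (2 * x ^ 2 + 3 * y ^ 2) * v ^ 2 := by ring
      have e2 : p ∣ 2 * ((x * -v + u * y) * (x * v + u * y)) := by
        rw [e]; exact dvd_sub (hh.mul_right _) (h.mul_right _)
      exact (hp.dvd_or_dvd e2).resolve_left h2
  rcases hp.dvd_or_dvd key with hk | hk
  · obtain ⟨b, hb⟩ := dvd_of_dvd_y hp h2 (by rw [N_mul]; exact h.mul_right _) hk
    exact ⟨b, Or.inl (div_of_sc hp.ne_zero hπ hb)⟩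
  · obtain ⟨b, hb⟩ := dvd_of_dvd_y hp h2 (by rw [N_mul]; exact h.mul_right _) hk
    refine ⟨b, Or.inr (div_of_sc (π := conj π) hp.ne_zero (by rw [N_conj, hπ]) ?_)⟩
    rw [conj_conj]; exact hb

lemma sq_of_dvd {p : ℤ} (hp : Prime p) {a : El} (h : p ∣ N a) (hy : ¬ p ∣ a.y) :
    ∃ b : ℤ, p ∣ b ^ 2 + 6 := by
  have hc : IsCoprime p a.y := (Prime.coprime_iff_not_dvd hp).2 hy
  obtain ⟨r, t, hrt⟩ := hc
  obtain ⟨_ | _, x, y⟩ := a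
  · simp only [N_f] at h hrt
    refine ⟨t * x, ?_⟩
    have e : (t * x) ^ 2 + 6 = t ^ 2 * (x ^ 2 + 6 * y ^ 2) + p * (6 * r * (1 + t * y)) := by
      have : 6 = 6 * (t * y) ^ 2 + 6 * (1 - t * y) * (1 + t * y) := by ring
      have h1 : 1 - t * y = r * p := by linarith
      calc (t * x) ^ 2 + 6 = (t * x) ^ 2 + (6 * (t * y) ^ 2 + 6 * (1 - t * y) * (1 + t * y)) := by ring
        _ = _ := by rw [h1]; ring
    rw [e]; exact dvd_add (h.mul_left _) (dvd_mul_right _ _)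
  · simp only [N_t] at h hrt
    refine ⟨t * (2 * x), ?_⟩
    have e : (t * (2 * x)) ^ 2 + 6 = 2 * t ^ 2 * (2 * x ^ 2 + 3 * y ^ 2) + p * (6 * r * (1 + t * y)) := by
      have h1 : 1 - t * y = r * p := by linarith
      calc (t * (2 * x)) ^ 2 + 6 = (t * (2 * x)) ^ 2 + (6 * (t * y) ^ 2 + 6 * (1 - t * y) * (1 + t * y)) := by ring
        _ = _ := by rw [h1]; ring
    rw [e]; exact dvd_add (h.mul_left _) (dvd_mul_right _ _)

lemma exists_div {p : ℤ} (hp : Prime p) (hp0 : 0 < p) (h2 : ¬ p ∣ 2) {a : El} (h : p ∣ N a) :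
    (∃ b, a = sc p b) ∨ ∃ π, N π = p ∧ ∃ b, a = π * b := by
  by_cases hy : p ∣ a.y
  · exact Or.inl (dvd_of_dvd_y hp h2 h hy)
  · right
    obtain ⟨b, hb⟩ := sq_of_dvd hp h hy
    obtain ⟨π, hπ⟩ := exists_of_sq hp0 hb
    obtain ⟨c, hc | hc⟩ := div_prime hp h2 hπ h
    · exact ⟨π, hπ, c, hc⟩
    · exact ⟨conj π, by rw [N_conj, hπ], c, hc⟩

/-- existence of factorisations -/
lemma exists_fac : ∀ m n : ℕ, Nat.Coprime m n → Nat.Coprime m 6 → ∀ a : El, N a = (m : ℤ) * n →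
    ∃ b c, N b = m ∧ N c = n ∧ b * c = a := by
  intro m
  induction m using Nat.strong_induction_on with
  | _ m ih =>
  intro n hmn h6 a ha
  by_cases hm1 : m = 1
  · subst hm1
    exact ⟨1, a, by simp [N_one], by simpa using ha, one_mul a⟩
  have hm0 : m ≠ 0 := by rintro rfl; revert h6; decide
  obtain ⟨q, hq, k, rfl⟩ := Nat.exists_prime_and_dvd hm1
  have hqz : Prime (q : ℤ) := Nat.prime_iff_prime_int.1 hq
  have hq0 : (q : ℤ) ≠ 0 := hqz.ne_zero
  have hk0 : k ≠ 0 := by rintro rfl; simp at hm0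
  have hq6 : Nat.Coprime q 6 := Nat.Coprime.coprime_dvd_left (dvd_mul_right _ _) h6
  have hk6 : Nat.Coprime k 6 := Nat.Coprime.coprime_dvd_left (dvd_mul_left _ _) h6
  have hqn : Nat.Coprime q n := Nat.Coprime.coprime_dvd_left (dvd_mul_right _ _) hmn
  have hkn : Nat.Coprime k n := Nat.Coprime.coprime_dvd_left (dvd_mul_left _ _) hmn
  have h2 : ¬ (q : ℤ) ∣ 2 := by
    intro h
    have h : q ∣ 2 := by exact_mod_cast h
    have := (Nat.prime_dvd_prime_iff_eq hq Nat.prime_two).1 h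
    subst this; revert hq6; decide
  rcases exists_div hqz (by exact_mod_cast hq.pos) h2 (a := a)
    (by rw [ha]; push_cast; exact ⟨k * n, by ring⟩) with ⟨b, rfl⟩ | ⟨π, hπ, b, rfl⟩
  · rw [N_sc] at ha
    push_cast at ha
    have h3 : (q : ℤ) * N b = k * n := by
      apply mul_left_cancel₀ hq0; linarith
    have h4 : q ∣ k := by
      have : (q : ℤ) ∣ ((k * n : ℕ) : ℤ) := by push_cast; rw [← h3]; exact dvd_mul_right _ _
      have : q ∣ k * n := by exact_mod_cast this
      exact hqn.dvd_of_dvd_mul_right this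
    obtain ⟨l, rfl⟩ := h4
    have hl0 : 0 < l := by rcases Nat.eq_zero_or_pos l with rfl | h; simp at hk0; exact h
    have hl : l < q * (q * l) := by
      have := hq.two_le
      nlinarith [Nat.mul_le_mul this this]
    obtain ⟨c, e, hc, he, hce⟩ := ih l hl n (Nat.Coprime.coprime_dvd_left (dvd_mul_left _ _) hkn)
      (Nat.Coprime.coprime_dvd_left (dvd_mul_left _ _) hk6) b
      (by apply mul_left_cancel₀ hq0; rw [h3]; push_cast; ring)
    exact ⟨sc q c, e, by rw [N_sc, hc]; push_cast; ring, he, by rw [sc_mul, hce]⟩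
  · rw [N_mul, hπ] at ha
    push_cast at ha
    have hl : k < q * k := by
      have := hq.two_le
      have : 0 < k := Nat.pos_of_ne_zero hk0
      nlinarith
    obtain ⟨c, e, hc, he, hce⟩ := ih k hl n hkn hk6 b
      (by apply mul_left_cancel₀ hq0; rw [ha]; ring)
    exact ⟨π * c, e, by rw [N_mul, hπ, hc]; push_cast; ring, he, by rw [mul_assoc, hce]⟩

/-- uniqueness of factorisations -/
lemma unique_fac {m n : ℕ} (hmn : Nat.Coprime m n) (hm : m ≠ 0) (hn : n ≠ 0) {b c b' c' : El}
    (hb : N b = m) (hc : N c = n) (hb' : N b' = m) (hc' : N c' = n) (h : b * c = b' * c') :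
    (b' = b ∧ c' = c) ∨ (b' = sc (-1) b ∧ c' = sc (-1) c) := by
  have hm' : (m : ℤ) ≠ 0 := by exact_mod_cast hm
  have e1 : sc n (conj b * b') = sc m (c * conj c') := by
    calc sc n (conj b * b') = conj b * b' * (c' * conj c') := by
          rw [mul_conj, hc', mul_comm (conj b * b'), sc_one_mul]
      _ = conj b * (b' * c') * conj c' := by simp only [mul_assoc]
      _ = (b * conj b) * (c * conj c') := by rw [← h]; ac_rfl
      _ = _ := by rw [mul_conj, hb, sc_one_mul]
  have hcop : IsCoprime (m : ℤ) n := Nat.isCoprime_iff_coprime.2 hmn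
  obtain ⟨ε, hε⟩ : ∃ ε, conj b * b' = sc m ε := by
    have hx := congrArg El.x e1
    have hy := congrArg El.y e1
    simp only [sc] at hx hy
    obtain ⟨u, hu⟩ := hcop.dvd_of_dvd_mul_left (Dvd.intro _ hx.symm)
    obtain ⟨v, hv⟩ := hcop.dvd_of_dvd_mul_left (Dvd.intro _ hy.symm)
    exact ⟨⟨(conj b * b').d, u, v⟩, by ext <;> simp [sc, hu, hv]⟩
  have hN : N ε = 1 := by
    have := congrArg N hε
    rw [N_mul, N_conj, N_sc, hb, hb'] at this
    have h3 : (m : ℤ) ^ 2 ≠ 0 := pow_ne_zero _ hm'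
    apply mul_left_cancel₀ h3
    linarith
  have hb2 : b' = b * ε := by
    apply div_of_sc hm' hb
    rw [mul_comm, hε]
  have hbN : N b ≠ 0 := by rw [hb]; exact hm'
  rcases N_eq_one hN with h1 | h1
  · left
    rw [h1, mul_one] at hb2
    subst hb2
    exact ⟨rfl, (cancel hbN h).symm⟩
  · right
    rw [h1, mul_comm, sc_one_mul] at hb2
    subst hb2
    refine ⟨rfl, ?_⟩
    rw [sc_mul] at h
    have : b * c' = b * sc (-1) c := by
      rw [mul_comm b (sc _ _), sc_mul, mul_comm c, h, sc_sc]
      norm_num [sc_eq_one]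
    exact cancel hbN this

end El

namespace El
open Finset

noncomputable def S (n : ℕ) : Finset El :=
  ((univ ×ˢ (Icc (-(n : ℤ)) n ×ˢ Icc (-(n : ℤ)) n)).image
    (fun t : Bool × ℤ × ℤ => (⟨t.1, t.2.1, t.2.2⟩ : El))).filter (fun a => N a = n)

lemma abs_le_N (a : El) : |a.x| ≤ N a ∧ |a.y| ≤ N a := by
  have h (z : ℤ) : |z| ≤ z ^ 2 := by
    rw [← sq_abs]
    rcases eq_or_ne z 0 with rfl | hz
    · simp
    · nlinarith [Int.one_le_abs hz]
  obtain ⟨_ | _, x, y⟩ := a <;> simp only [N_f, N_t] <;> constructor <;>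
    nlinarith [h x, h y, sq_nonneg x, sq_nonneg y]

lemma mem_S {n : ℕ} {a : El} : a ∈ S n ↔ N a = n := by
  unfold S
  rw [mem_filter]
  refine ⟨fun h => h.2, fun h => ⟨?_, h⟩⟩
  have h2 := abs_le_N a
  rw [h, abs_le, abs_le] at h2
  refine mem_image.2 ⟨(a.d, a.x, a.y), ?_, rfl⟩
  simp only [mem_product, mem_univ, mem_Icc, true_and]
  exact ⟨h2.1, h2.2⟩

lemma ne_neg {a : El} (h : N a ≠ 0) : a ≠ sc (-1) a := by
  intro e
  have h2 := congrArg El.x e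
  have h3 := congrArg El.y e
  simp only [sc] at h2 h3
  have h4 : a.x = 0 := by omega
  have h5 : a.y = 0 := by omega
  clear h2 h3 e
  apply h
  obtain ⟨_ | _, x, y⟩ := a <;> simp only at h4 h5 <;> subst h4 <;> subst h5 <;> simp

def e : El → ZMod 3
  | ⟨false, x, y⟩ => x * y
  | ⟨true, x, y⟩ => - (x * y)

lemma x_ne {a : El} (h : ¬ (3 : ℤ) ∣ N a) : (a.x : ZMod 3) ≠ 0 := by
  intro h2
  rw [ZMod.intCast_zmod_eq_zero_iff_dvd] at h2
  obtain ⟨k, hk⟩ := h2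
  push_cast at hk
  apply h
  obtain ⟨_ | _, x, y⟩ := a <;> simp only [N_f, N_t] at * <;> subst hk
  · exact ⟨3 * k ^ 2 + 2 * y ^ 2, by ring⟩
  · exact ⟨6 * k ^ 2 + y ^ 2, by ring⟩

lemma e_mul {a b : El} (ha : ¬ (3 : ℤ) ∣ N a) (hb : ¬ (3 : ℤ) ∣ N b) : e (a * b) = e a + e b := by
  have ha' := x_ne ha
  have hb' := x_ne hb
  clear ha hb
  obtain ⟨_ | _, x, y⟩ := a <;> obtain ⟨_ | _, u, v⟩ := b <;>
    simp only [mul_ff, mul_ft, mul_tf, mul_tt, e] at * <;> push_cast <;>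
    generalize (x : ZMod 3) = X at * <;> generalize (y : ZMod 3) = Y at * <;>
    generalize (u : ZMod 3) = U at * <;> generalize (v : ZMod 3) = V at * <;>
    clear x y u v <;> revert X Y U V <;> decide

lemma e_conj (a : El) : e (conj a) = - e a := by
  obtain ⟨_ | _, x, y⟩ := a <;> simp [conj, e]

lemma e_neg (a : El) : e (sc (-1) a) = e a := by
  obtain ⟨_ | _, x, y⟩ := a <;> simp [sc, e]

noncomputable def chi (a : El) : ℂ := ZMod.stdAddChar (e a)

lemma norm_chi (a : El) : ‖chi a‖ = 1 := by
  unfold chi; exact AddChar.norm_apply _ _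

lemma chi_mul {a b : El} (ha : ¬ (3 : ℤ) ∣ N a) (hb : ¬ (3 : ℤ) ∣ N b) : chi (a * b) = chi a * chi b := by
  unfold chi; rw [e_mul ha hb, AddChar.map_add_eq_mul]

lemma chi_conj (a : El) : chi (conj a) = (starRingEnd ℂ) (chi a) := by
  unfold chi; rw [e_conj, AddChar.map_neg_eq_conj]

lemma std_re (t : ZMod 3) : (ZMod.stdAddChar t : ℂ).re = if t = 0 then 1 else -1 / 2 := by
  have h30 : ∀ u : ZMod 3, (3 : ℕ) • u = 0 := by decide
  split_ifs with h
  · subst h; simp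
  · have h1 : (ZMod.stdAddChar t : ℂ) ≠ 1 := by
      intro h2
      apply h
      apply ZMod.injective_stdAddChar
      rw [h2, AddChar.map_zero_eq_one]
    have h3 : (ZMod.stdAddChar t : ℂ) ^ 3 = 1 := by
      rw [← AddChar.map_nsmul_eq_pow, h30 t, AddChar.map_zero_eq_one]
    have h4 : (ZMod.stdAddChar t : ℂ) * (starRingEnd ℂ) (ZMod.stdAddChar t) = 1 := by
      rw [← AddChar.map_neg_eq_conj, ← AddChar.map_add_eq_mul, add_neg_cancel, AddChar.map_zero_eq_one]
    set z : ℂ := ZMod.stdAddChar t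
    have h5 : z ^ 2 + z + 1 = 0 := by
      have : (z - 1) * (z ^ 2 + z + 1) = 0 := by linear_combination h3
      exact (mul_eq_zero.1 this).resolve_left (sub_ne_zero.2 h1)
    have h6 : (starRingEnd ℂ) z = z ^ 2 := by
      calc (starRingEnd ℂ) z = z ^ 3 * (starRingEnd ℂ) z := by rw [h3, one_mul]
        _ = z ^ 2 * (z * (starRingEnd ℂ) z) := by ring
        _ = z ^ 2 := by rw [h4, mul_one]
    have h7 : z + (starRingEnd ℂ) z = -1 := by rw [h6]; linear_combination h5
    have h8 := congrArg Complex.re h7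
    simp at h8
    linarith

noncomputable def w (a : El) : ℝ := if e a = 0 then 1 else -1 / 2

lemma chi_re (a : El) : (chi a).re = w a := std_re _

lemma sum_chi (n : ℕ) : ∑ a ∈ S n, chi a = ((∑ a ∈ S n, w a : ℝ) : ℂ) := by
  have h1 : (starRingEnd ℂ) (∑ a ∈ S n, chi a) = ∑ a ∈ S n, chi a := by
    rw [map_sum]
    refine sum_nbij' conj conj ?_ ?_ ?_ ?_ ?_
    · intro a ha; rw [mem_S] at *; rw [N_conj, ha]
    · intro a ha; rw [mem_S] at *; rw [N_conj, ha]
    · intro a _; exact conj_conj a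
    · intro a _; exact conj_conj a
    · intro a _; exact (chi_conj a).symm
  rw [Complex.conj_eq_iff_re] at h1
  rw [← h1, Complex.re_sum]
  simp only [chi_re]

lemma not_three {n : ℕ} (h : Nat.Coprime n 6) : ¬ (3 : ℤ) ∣ n := by
  intro h3
  have h3 : 3 ∣ n := by exact_mod_cast h3
  have : 3 ∣ Nat.gcd n 6 := Nat.dvd_gcd h3 (by norm_num)
  rw [h] at this; omega

lemma sum_mul {m n : ℕ} (hmn : Nat.Coprime m n) (hm : Nat.Coprime m 6) (hn : Nat.Coprime n 6) :
    (∑ a ∈ S m, chi a) * (∑ a ∈ S n, chi a) = 2 * ∑ a ∈ S (m * n), chi a := by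
  have hm0 : m ≠ 0 := by rintro rfl; revert hm; decide
  have hn0 : n ≠ 0 := by rintro rfl; revert hn; decide
  rw [sum_mul_sum, ← sum_product']
  have h1 : ∀ t ∈ S m ×ˢ S n, t.1 * t.2 ∈ S (m * n) := by
    intro t ht
    rw [mem_product, mem_S, mem_S] at ht
    rw [mem_S, N_mul, ht.1, ht.2]; push_cast; rfl
  rw [← sum_fiberwise_of_maps_to h1, mul_sum]
  refine sum_congr rfl fun a ha => ?_
  rw [mem_S] at ha
  push_cast at ha
  obtain ⟨b, c, hb, hc, rfl⟩ := exists_fac m n hmn hm a ha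
  have hfib : ((S m ×ˢ S n).filter fun t => t.1 * t.2 = b * c) = {(b, c), (sc (-1) b, sc (-1) c)} := by
    ext ⟨b', c'⟩
    simp only [mem_filter, mem_product, mem_S, mem_insert, mem_singleton, Prod.mk.injEq]
    constructor
    · rintro ⟨⟨h1, h2⟩, h3⟩
      exact unique_fac hmn hm0 hn0 hb hc h1 h2 h3.symm
    · rintro (⟨rfl, rfl⟩ | ⟨rfl, rfl⟩)
      · exact ⟨⟨hb, hc⟩, rfl⟩
      · refine ⟨⟨by rw [N_sc, hb]; ring, by rw [N_sc, hc]; ring⟩, ?_⟩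
        rw [sc_mul, mul_comm b, sc_mul, sc_sc, mul_comm c]; norm_num [sc_eq_one]
  have hne : (b, c) ≠ (sc (-1) b, sc (-1) c) := by
    intro h
    exact ne_neg (by rw [hb]; exact_mod_cast hm0) (congrArg Prod.fst h)
  rw [hfib, sum_pair hne]
  have h3b : ¬ (3 : ℤ) ∣ N b := by rw [hb]; exact not_three hm
  have h3c : ¬ (3 : ℤ) ∣ N c := by rw [hc]; exact not_three hn
  simp only
  rw [chi_mul h3b h3c]
  have : ∀ a, chi (sc (-1) a) = chi a := fun a => by unfold chi; rw [e_neg]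
  rw [this, this]; ring

noncomputable def av (n : ℕ) : ℝ := if Nat.Coprime n 6 then (1 / 2) * ∑ a ∈ S n, w a else 0

lemma S_one : S 1 = {1, sc (-1) 1} := by
  ext a
  rw [mem_S, mem_insert, mem_singleton]
  constructor
  · intro h; exact N_eq_one (by simpa using h)
  · rintro (rfl | rfl)
    · simp [N_one]
    · simp [N_sc, N_one]

lemma av_mul {m n : ℕ} (hmn : Nat.Coprime m n) : av (m * n) = av m * av n := by
  unfold av
  by_cases hm : Nat.Coprime m 6
  · by_cases hn : Nat.Coprime n 6
    · rw [if_pos hm, if_pos hn, if_pos (Nat.coprime_mul_iff_left.2 ⟨hm, hn⟩)]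
      have := sum_mul hmn hm hn
      rw [sum_chi, sum_chi, sum_chi] at this
      have h2 : (∑ a ∈ S m, w a) * (∑ a ∈ S n, w a) = 2 * ∑ a ∈ S (m * n), w a := by exact_mod_cast this
      linarith
    · rw [if_neg hn, if_neg (fun h => hn (Nat.coprime_mul_iff_left.1 h).2), mul_zero]
  · rw [if_neg hm, if_neg (fun h => hm (Nat.coprime_mul_iff_left.1 h).1), zero_mul]

lemma prime_ge {p : ℕ} (hp : p.Prime) (h6 : Nat.Coprime p 6) : ¬ (p : ℤ) ∣ 2 := by
  intro h
  have h : p ∣ 2 := by exact_mod_cast h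
  have := (Nat.prime_dvd_prime_iff_eq hp Nat.prime_two).1 h
  subst this; revert h6; decide

lemma card_S {p : ℕ} (hp : p.Prime) (h6 : Nat.Coprime p 6) (k : ℕ) : (S (p ^ k)).card ≤ 2 * (k + 1) := by
  have hpz : Prime (p : ℤ) := Nat.prime_iff_prime_int.1 hp
  have h2 := prime_ge hp h6
  by_cases hπ : ∃ π, N π = p
  · obtain ⟨π, hπ⟩ := hπ
    have key : ∀ k : ℕ, ∀ a, N a = (p : ℤ) ^ k → ∃ i ∈ range (k + 1), ∃ ε : ℤ, (ε = 1 ∨ ε = -1) ∧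
        a = sc ε (π ^ i * (conj π) ^ (k - i)) := by
      intro k
      induction k with
      | zero =>
        intro a ha
        refine ⟨0, by simp, ?_⟩
        rcases N_eq_one (by simpa using ha) with rfl | rfl
        · exact ⟨1, by simp, by simp [sc_eq_one]⟩
        · exact ⟨-1, by simp, by simp⟩
      | succ k ih =>
        intro a ha
        obtain ⟨b, hb | hb⟩ := div_prime hpz h2 hπ (a := a) (by rw [ha]; exact dvd_pow_self _ (by omega))
        · have hN : N b = (p : ℤ) ^ k := by
            rw [hb, N_mul, hπ, pow_succ'] at ha
            exact mul_left_cancel₀ hpz.ne_zero ha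
          obtain ⟨i, hi, ε, hε, h⟩ := ih b hN
          rw [mem_range] at hi
          refine ⟨i + 1, by rw [mem_range]; omega, ε, hε, ?_⟩
          rw [hb, h, mul_comm π, sc_mul, show k + 1 - (i + 1) = k - i by omega, pow_succ]
          congr 1; ac_rfl
        · have hN : N b = (p : ℤ) ^ k := by
            rw [hb, N_mul, N_conj, hπ, pow_succ'] at ha
            exact mul_left_cancel₀ hpz.ne_zero ha
          obtain ⟨i, hi, ε, hε, h⟩ := ih b hN
          rw [mem_range] at hi
          refine ⟨i, by rw [mem_range]; omega, ε, hε, ?_⟩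
          rw [hb, h, mul_comm (conj π), sc_mul, show k + 1 - i = (k - i) + 1 by omega, pow_succ]
          congr 1; ac_rfl
    have hsub : S (p ^ k) ⊆ (({1, -1} : Finset ℤ) ×ˢ range (k + 1)).image
        (fun t => sc t.1 (π ^ t.2 * (conj π) ^ (k - t.2))) := by
      intro a ha
      rw [mem_S] at ha
      push_cast at ha
      obtain ⟨i, hi, ε, hε, h⟩ := key k a ha
      refine mem_image.2 ⟨(ε, i), ?_, h.symm⟩
      rw [mem_product]
      exact ⟨by simpa using hε, hi⟩
    refine (card_le_card hsub).trans (card_image_le.trans ?_)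
    rw [card_product, card_range]
    simp
  · have hsc : ∀ a, (p : ℤ) ∣ N a → ∃ b, a = sc p b := by
      intro a ha
      rcases exists_div hpz (by exact_mod_cast hp.pos) h2 ha with h | ⟨π, h, _⟩
      · exact h
      · exact absurd ⟨π, h⟩ hπ
    have : (S (p ^ k)).card ≤ 2 := by
      induction k using Nat.strong_induction_on with
      | _ k ih =>
      rcases k with _ | _ | k
      · simp only [pow_zero, S_one]; exact card_le_two
      · have : S (p ^ (0 + 1)) = ∅ := by
          rw [eq_empty_iff_forall_notMem]
          intro a ha
          rw [mem_S] at ha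
          exact hπ ⟨a, by simpa using ha⟩
        rw [this]; simp
      · have hsub : S (p ^ (k + 1 + 1)) ⊆ (S (p ^ k)).image (sc p) := by
          intro a ha
          rw [mem_S] at ha
          push_cast at ha
          obtain ⟨b, rfl⟩ := hsc a (by rw [ha]; exact dvd_pow_self _ (by omega))
          refine mem_image_of_mem _ ?_
          rw [mem_S]
          rw [N_sc] at ha
          apply mul_left_cancel₀ (pow_ne_zero 2 hpz.ne_zero)
          rw [ha]; push_cast; ring
        exact (card_le_card hsub).trans (card_image_le.trans (ih k (by omega)))
    omega

lemma abs_w (a : El) : |w a| ≤ 1 := by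
  unfold w; split_ifs <;> norm_num

lemma good_av : Good av where
  zero := by unfold av; rw [if_neg (by decide)]
  one := by
    unfold av
    rw [if_pos (by decide), S_one, sum_pair]
    · have h1 : e 1 = 0 := by simp [e]
      have h2 : e (sc (-1) 1) = 0 := by rw [e_neg, h1]
      simp [w, h1, h2]; norm_num
    · exact ne_neg (by rw [N_one]; norm_num)
  mul m n h := av_mul h
  two k hk := by
    unfold av; rw [if_neg]
    rw [Nat.coprime_pow_left_iff (by omega)]; decide
  three k hk := by
    unfold av; rw [if_neg]
    rw [Nat.coprime_pow_left_iff (by omega)]; decide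
  bd p k hp := by
    unfold av
    split_ifs with h
    · rcases Nat.eq_zero_or_pos k with rfl | hk
      · have := S_one
        rw [pow_zero, S_one]
        have h1 : |∑ a ∈ ({1, sc (-1) 1} : Finset El), w a| ≤ 2 := by
          refine (abs_sum_le_sum_abs _ _).trans ((sum_le_card_nsmul _ _ 1 fun a _ => abs_w a).trans ?_)
          simp only [nsmul_eq_mul, mul_one]
          exact_mod_cast card_le_two
        rw [abs_mul]; norm_num; linarith
      · rw [Nat.coprime_pow_left_iff hk] at h
        have h1 : |∑ a ∈ S (p ^ k), w a| ≤ 2 * (k + 1) := by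
          refine (abs_sum_le_sum_abs _ _).trans ((sum_le_card_nsmul _ _ 1 fun a _ => abs_w a).trans ?_)
          simp only [nsmul_eq_mul, mul_one]
          exact_mod_cast card_S hp h k
        rw [abs_mul, abs_of_pos (by norm_num : (0:ℝ) < 1 / 2)]; linarith
    · simp; positivity

end El

namespace El
open Finset

lemma cop6 (n : ℕ) : Nat.Coprime n 6 ↔ ¬ 2 ∣ n ∧ ¬ 3 ∣ n := by
  rw [show 6 = 2 * 3 from rfl, Nat.coprime_mul_iff_right, Nat.coprime_comm,
    Nat.Prime.coprime_iff_not_dvd Nat.prime_two, Nat.coprime_comm,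
    Nat.Prime.coprime_iff_not_dvd Nat.prime_three]

lemma cop6N (a : El) : Nat.Coprime (N a).toNat 6 ↔ ¬ (2 : ℤ) ∣ N a ∧ ¬ (3 : ℤ) ∣ N a := by
  have := N_nonneg a
  rw [cop6]; omega

lemma sum_symm (h : ℤ → ℝ) (B : ℕ) : ∑ y ∈ Icc (-((B + 1 : ℕ) : ℤ)) ((B + 1 : ℕ) : ℤ), h y =
    ∑ y ∈ Icc (-(B : ℤ)) (B : ℤ), h y + h ((B : ℤ) + 1) + h (-((B : ℤ) + 1)) := by
  have : Icc (-((B + 1 : ℕ) : ℤ)) ((B + 1 : ℕ) : ℤ) =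
      insert (-((B : ℤ) + 1)) (insert ((B : ℤ) + 1) (Icc (-(B : ℤ)) (B : ℤ))) := by
    ext y; simp only [mem_Icc, mem_insert]; omega
  rw [this, sum_insert, sum_insert]
  · ring
  · simp only [mem_Icc]; omega
  · simp only [mem_Icc, mem_insert]; omega

lemma sum_h1 (B : ℕ) : ∑ y ∈ Icc (-(B : ℤ)) (B : ℤ), (if (3 : ℤ) ∣ y then (1 : ℝ) else -1 / 2) =
    if B % 3 = 0 then 1 else if B % 3 = 1 then 0 else -1 := by
  induction B with
  | zero => simp
  | succ B ih =>
    rw [sum_symm, ih]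
    have h3 : B % 3 = 0 ∨ B % 3 = 1 ∨ B % 3 = 2 := by omega
    rcases h3 with h | h | h
    · rw [if_pos h, if_neg (by omega), if_neg (by omega), if_neg (by omega), if_pos (by omega)]; norm_num
    · rw [if_neg (by omega), if_pos h, if_neg (by omega), if_neg (by omega), if_neg (by omega), if_neg (by omega)]; norm_num
    · rw [if_neg (by omega), if_neg (by omega), if_pos (by omega), if_pos (by omega), if_pos (by omega)]; norm_num

lemma sum_h2 (B : ℕ) : ∑ y ∈ Icc (-(B : ℤ)) (B : ℤ),
    (if (2 : ℤ) ∣ y then 0 else if (3 : ℤ) ∣ y then (1 : ℝ) else -1 / 2) =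
    if B % 6 = 0 ∨ B % 6 = 5 then 0 else if B % 6 = 1 ∨ B % 6 = 2 then -1 else 1 := by
  induction B with
  | zero => simp
  | succ B ih =>
    rw [sum_symm, ih]
    have h3 : B % 6 = 0 ∨ B % 6 = 1 ∨ B % 6 = 2 ∨ B % 6 = 3 ∨ B % 6 = 4 ∨ B % 6 = 5 := by omega
    rcases h3 with h | h | h | h | h | h
    · rw [if_pos (by omega), if_neg (by omega), if_neg (by omega), if_neg (by omega), if_neg (by omega),
        if_neg (by omega), if_pos (by omega)]; norm_num
    · rw [if_neg (by omega), if_pos (by omega), if_pos (by omega), if_pos (by omega), if_neg (by omega),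
        if_pos (by omega)]; norm_num
    · rw [if_neg (by omega), if_pos (by omega), if_neg (by omega), if_pos (by omega), if_neg (by omega),
        if_pos (by omega), if_neg (by omega), if_neg (by omega)]; norm_num
    · rw [if_neg (by omega), if_neg (by omega), if_pos (by omega), if_pos (by omega), if_neg (by omega),
        if_neg (by omega)]; norm_num
    · rw [if_neg (by omega), if_neg (by omega), if_neg (by omega), if_neg (by omega), if_neg (by omega),
        if_neg (by omega), if_pos (by omega)]; norm_num
    · rw [if_pos (by omega), if_pos (by omega), if_pos (by omega), if_pos (by omega)]; norm_num

noncomputable def gg (a : El) : ℝ := if Nat.Coprime (N a).toNat 6 then w a else 0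

lemma e_zero {a : El} (hx : ¬ (3 : ℤ) ∣ a.x) : e a = 0 ↔ (3 : ℤ) ∣ a.y := by
  have : Fact (Nat.Prime 3) := ⟨Nat.prime_three⟩
  have h1 : (a.x : ZMod 3) ≠ 0 := by
    rw [Ne, ZMod.intCast_zmod_eq_zero_iff_dvd]; exact_mod_cast hx
  have h2 : (a.y : ZMod 3) = 0 ↔ (3 : ℤ) ∣ a.y := by
    rw [ZMod.intCast_zmod_eq_zero_iff_dvd]; norm_num
  rw [← h2]
  obtain ⟨_ | _, x, y⟩ := a <;> simp only [e, neg_eq_zero, mul_eq_zero] <;> simp only at h1 <;> tauto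

lemma dvd_mul_sq {p : ℤ} (hp : Prime p) {c z : ℤ} (hc : ¬ p ∣ c) : p ∣ c * z ^ 2 ↔ p ∣ z := by
  constructor
  · intro h; exact hp.dvd_of_dvd_pow ((hp.dvd_or_dvd h).resolve_left hc)
  · intro h; exact Dvd.dvd.mul_left (dvd_pow h (by norm_num)) _

lemma gg_f (x y : ℤ) : gg ⟨false, x, y⟩ =
    if ¬ (2 : ℤ) ∣ x ∧ ¬ (3 : ℤ) ∣ x then (if (3 : ℤ) ∣ y then (1 : ℝ) else -1 / 2) else 0 := by
  unfold gg
  have h2 : (2 : ℤ) ∣ x ^ 2 + 6 * y ^ 2 ↔ (2 : ℤ) ∣ x := by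
    rw [← dvd_mul_sq Int.prime_two (c := 1) (z := x) (by norm_num)]; omega
  have h3 : (3 : ℤ) ∣ x ^ 2 + 6 * y ^ 2 ↔ (3 : ℤ) ∣ x := by
    rw [← dvd_mul_sq Int.prime_three (c := 1) (z := x) (by norm_num)]; omega
  have hc := cop6N ⟨false, x, y⟩
  rw [N_f, h2, h3] at hc
  by_cases h : ¬ (2 : ℤ) ∣ x ∧ ¬ (3 : ℤ) ∣ x
  · rw [N_f, if_pos (hc.2 h), if_pos h, w]
    simp only [e_zero (a := ⟨false, x, y⟩) h.2]
  · rw [N_f, if_neg (fun h5 => h (hc.1 h5)), if_neg h]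

lemma gg_t (x y : ℤ) : gg ⟨true, x, y⟩ =
    if ¬ (3 : ℤ) ∣ x then (if (2 : ℤ) ∣ y then 0 else if (3 : ℤ) ∣ y then (1 : ℝ) else -1 / 2) else 0 := by
  unfold gg
  have h2 : (2 : ℤ) ∣ 2 * x ^ 2 + 3 * y ^ 2 ↔ (2 : ℤ) ∣ y := by
    rw [← dvd_mul_sq Int.prime_two (c := 3) (z := y) (by norm_num)]; omega
  have h3 : (3 : ℤ) ∣ 2 * x ^ 2 + 3 * y ^ 2 ↔ (3 : ℤ) ∣ x := by
    rw [← dvd_mul_sq Int.prime_three (c := 2) (z := x) (by norm_num)]; omega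
  have hc := cop6N ⟨true, x, y⟩
  rw [N_t, h2, h3] at hc
  by_cases h : ¬ (3 : ℤ) ∣ x
  · rw [if_pos h]
    by_cases h2 : (2 : ℤ) ∣ y
    · rw [N_t, if_neg (fun h5 => (hc.1 h5).1 h2), if_pos h2]
    · rw [N_t, if_pos (hc.2 ⟨h2, h⟩), if_neg h2, w]
      simp only [e_zero (a := ⟨true, x, y⟩) h]
  · rw [N_t, if_neg (fun h5 => h (hc.1 h5).2), if_neg h]

lemma gg_sum (d : Bool) (x : ℤ) (B : ℕ) : |∑ y ∈ Icc (-(B : ℤ)) (B : ℤ), gg ⟨d, x, y⟩| ≤ 1 := by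
  cases d
  · simp only [gg_f]
    split_ifs with h
    · rw [sum_h1]; split_ifs <;> norm_num
    · simp
  · simp only [gg_t]
    split_ifs with h
    · simp
    · rw [sum_h2]; split_ifs <;> norm_num

lemma exB (c : ℕ) (hc : 0 < c) (m : ℤ) (hm : 0 ≤ m) : ∃ B : ℕ, ∀ y : ℤ, (c : ℤ) * y ^ 2 ≤ m ↔ -(B : ℤ) ≤ y ∧ y ≤ B := by
  lift m to ℕ using hm
  refine ⟨Nat.sqrt (m / c), fun y => ?_⟩
  rw [← abs_le, Int.abs_eq_natAbs, Nat.cast_le, Nat.le_sqrt, Nat.le_div_iff_mul_le hc, ← Int.natAbs_sq y]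
  rw [← @Nat.cast_le ℤ]; push_cast
  rw [mul_comm, sq]

noncomputable def T (n : ℕ) : Finset El := (range (n + 1)).biUnion S

lemma mem_T {n : ℕ} {a : El} : a ∈ T n ↔ N a ≤ n := by
  have := N_nonneg a
  simp only [T, mem_biUnion, mem_range, mem_S]
  constructor
  · rintro ⟨k, hk, h⟩; omega
  · intro h; exact ⟨(N a).toNat, by omega, by omega⟩

lemma sum_T (n : ℕ) : ∑ k ∈ Icc 1 n, av k = (1 / 2) * ∑ a ∈ T n, gg a := by
  unfold T
  rw [sum_biUnion, mul_sum]
  · rw [Finset.sum_range_succ']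
    have h : ∀ k, (1 / 2) * ∑ a ∈ S k, gg a = av k := by
      intro k
      have : ∀ a ∈ S k, gg a = if Nat.Coprime k 6 then w a else 0 := by
        intro a ha
        rw [mem_S] at ha
        simp [gg, ha]
      rw [sum_congr rfl this]
      unfold av
      split_ifs <;> simp
    simp only [h, good_av.zero, add_zero]
    rw [Finset.range_eq_Ico, Finset.sum_Ico_add' (fun k => av k) 0 n 1]
    congr 1
  · intro i _ j _ hij
    rw [Function.onFun, disjoint_left]
    intro a h1 h2
    rw [mem_S] at h1 h2
    rw [h1] at h2
    exact hij (by exact_mod_cast h2)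

lemma gg_T (n : ℕ) : |∑ a ∈ T n, gg a| ≤ 2 * (2 * (Nat.sqrt n : ℝ) + 1) := by
  set r := Nat.sqrt n with hr
  have hmap : ∀ a ∈ T n, (a.d, a.x) ∈ (univ : Finset Bool) ×ˢ Icc (-(r : ℤ)) (r : ℤ) := by
    intro a ha
    rw [mem_T] at ha
    rw [mem_product, mem_Icc]
    refine ⟨mem_univ _, ?_⟩
    rw [← abs_le, Int.abs_eq_natAbs, Nat.cast_le, hr, Nat.le_sqrt, ← @Nat.cast_le ℤ]
    push_cast
    rw [← sq, sq_abs]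
    obtain ⟨_ | _, x, y⟩ := a <;> simp only [N_f, N_t] at * <;> nlinarith [sq_nonneg x, sq_nonneg y]
  rw [← sum_fiberwise_of_maps_to hmap]
  refine (abs_sum_le_sum_abs _ _).trans ((sum_le_card_nsmul _ _ 1 ?_).trans ?_)
  · rintro ⟨d, x⟩ -
    by_cases hx : N ⟨d, x, 0⟩ ≤ n
    · have : ∃ B : ℕ, ∀ y : ℤ, N ⟨d, x, y⟩ ≤ n ↔ -(B : ℤ) ≤ y ∧ y ≤ B := by
        cases d
        · simp only [N_f] at *
          obtain ⟨B, hB⟩ := exB 6 (by norm_num) (n - x ^ 2) (by linarith)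
          refine ⟨B, fun y => ?_⟩
          rw [← hB]; push_cast; constructor <;> intro h <;> linarith
        · simp only [N_t] at *
          obtain ⟨B, hB⟩ := exB 3 (by norm_num) (n - 2 * x ^ 2) (by linarith)
          refine ⟨B, fun y => ?_⟩
          rw [← hB]; push_cast; constructor <;> intro h <;> linarith
      obtain ⟨B, hB⟩ := this
      have : ∑ a ∈ T n with (a.d, a.x) = (d, x), gg a = ∑ y ∈ Icc (-(B : ℤ)) (B : ℤ), gg ⟨d, x, y⟩ := by
        refine sum_nbij' (fun a => a.y) (fun y => ⟨d, x, y⟩) ?_ ?_ ?_ ?_ ?_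
        · rintro ⟨d', x', y⟩ h
          simp only [mem_filter, mem_T, Prod.mk.injEq] at h
          obtain ⟨h1, rfl, rfl⟩ := h
          rw [mem_Icc]; exact (hB y).1 h1
        · intro y hy
          rw [mem_Icc] at hy
          simp only [mem_filter, mem_T, and_true]
          exact (hB y).2 hy
        · rintro ⟨d', x', y⟩ h
          simp only [mem_filter, mem_T, Prod.mk.injEq] at h
          obtain ⟨h1, rfl, rfl⟩ := h
          rfl
        · intro y _; rfl
        · rintro ⟨d', x', y⟩ h
          simp only [mem_filter, mem_T, Prod.mk.injEq] at h
          obtain ⟨h1, rfl, rfl⟩ := h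
          rfl
      rw [this]; exact gg_sum d x B
    · have : ∑ a ∈ T n with (a.d, a.x) = (d, x), gg a = 0 := by
        apply sum_eq_zero
        rintro ⟨d', x', y⟩ h
        simp only [mem_filter, mem_T, Prod.mk.injEq] at h
        obtain ⟨h1, rfl, rfl⟩ := h
        exfalso; apply hx
        cases d' <;> simp only [N_f, N_t] at * <;> nlinarith [sq_nonneg y]
      rw [this]; simp
  · rw [card_product, nsmul_eq_mul, mul_one, Int.card_Icc, card_univ, Fintype.card_bool]
    have : ((r : ℤ) + 1 - -(r : ℤ)).toNat = 2 * r + 1 := by omega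
    rw [this]; push_cast; rfl

lemma av_partial (n : ℕ) : |∑ k ∈ Icc 1 n, av k| ≤ 3 * (n : ℝ) ^ (1 / 2 : ℝ) := by
  rcases Nat.eq_zero_or_pos n with rfl | hn
  · simp
  rw [sum_T, abs_mul, abs_of_pos (by norm_num : (0:ℝ) < 1 / 2), ← Real.sqrt_eq_rpow]
  have h1 := gg_T n
  have h2 : (Nat.sqrt n : ℝ) ≤ √n := Real.nat_sqrt_le_real_sqrt
  have h3 : 1 ≤ √(n : ℝ) := by rw [Real.one_le_sqrt]; exact_mod_cast hn
  linarith

end El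

namespace El
open Finset

lemma e_of_dvd {a : El} (h : (3 : ℤ) ∣ a.y) : e a = 0 := by
  have h2 : (a.y : ZMod 3) = 0 := by
    rw [ZMod.intCast_zmod_eq_zero_iff_dvd]; exact_mod_cast h
  obtain ⟨_ | _, x, y⟩ := a <;> simp only [e] <;> simp only at h2 <;> rw [h2] <;> simp

lemma gcd_of_rep {p : ℕ} (hp : p.Prime) {a b x z : ℤ} (h : a * x ^ 2 + b * z ^ 2 = p) : IsCoprime x z := by
  rw [Int.isCoprime_iff_gcd_eq_one]
  have h1 : ((Int.gcd x z : ℕ) : ℤ) ^ 2 ∣ (p : ℤ) := by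
    rw [← h]
    exact dvd_add ((pow_dvd_pow_of_dvd (Int.gcd_dvd_left ..) 2).mul_left _)
      ((pow_dvd_pow_of_dvd (Int.gcd_dvd_right ..) 2).mul_left _)
  have h2 : (Int.gcd x z) ^ 2 ∣ p := by exact_mod_cast h1
  rw [sq] at h2
  exact Nat.isUnit_iff.1 (hp.prime.irreducible.squarefree _ h2)

lemma mem_Q {p : ℕ} (hp : p.Prime) (h6 : Nat.Coprime p 6) : p ∈ QSet ↔ ∃ a, N a = p ∧ e a = 0 := by
  have h23 := (cop6 p).1 h6
  have h2z : ¬ (2 : ℤ) ∣ p := by omega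
  have h3z : ¬ (3 : ℤ) ∣ p := by omega
  constructor
  · rintro ⟨-, -, j, hj, x, y, h, -⟩
    simp only [Set.mem_insert_iff, Set.mem_singleton_iff] at hj
    rcases hj with rfl | rfl | rfl
    · exact ⟨⟨true, 2 * x, 3 * y⟩, by rw [N_t]; linarith, e_of_dvd ⟨y, rfl⟩⟩
    · have hy : (2 : ℤ) ∣ 27 * y ^ 2 := by omega
      rw [dvd_mul_sq Int.prime_two (by norm_num)] at hy
      obtain ⟨z, rfl⟩ := hy
      exact ⟨⟨true, x, 3 * z⟩, by rw [N_t]; linarith, e_of_dvd ⟨z, rfl⟩⟩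
    · have hy : (2 : ℤ) ∣ 27 * y ^ 2 := by omega
      rw [dvd_mul_sq Int.prime_two (by norm_num)] at hy
      obtain ⟨z, rfl⟩ := hy
      have hz : (2 : ℤ) ∣ 27 * z ^ 2 := by
        rw [mul_pow] at h; omega
      rw [dvd_mul_sq Int.prime_two (by norm_num)] at hz
      obtain ⟨t, rfl⟩ := hz
      exact ⟨⟨false, x, 3 * t⟩, by rw [N_f]; linarith, e_of_dvd ⟨t, rfl⟩⟩
  · rintro ⟨a, ha, he⟩
    refine ⟨hp, ?_, ?_⟩
    · rw [Nat.odd_iff]; omega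
    have hx : ¬ (3 : ℤ) ∣ a.x := by
      have := x_ne (a := a) (by rw [ha]; exact h3z)
      rw [Ne, ZMod.intCast_zmod_eq_zero_iff_dvd] at this
      exact_mod_cast this
    rw [e_zero hx] at he
    obtain ⟨_ | _, x, y⟩ := a
    · simp only [N_f] at *
      obtain ⟨z, rfl⟩ := he
      refine ⟨8, by simp, x, 4 * z, by linarith, ?_⟩
      rw [← Int.isCoprime_iff_gcd_eq_one]
      have hc : IsCoprime x z := gcd_of_rep hp (a := 1) (b := 54) (by linarith)
      have hx2 : ¬ (2 : ℤ) ∣ x := by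
        rw [← dvd_mul_sq Int.prime_two (c := 1) (by norm_num)]; rw [mul_pow] at ha; omega
      have h2 : IsCoprime x 2 := ((Prime.coprime_iff_not_dvd Int.prime_two).2 hx2).symm
      rw [show 4 * z = 2 * (2 * z) by ring]
      exact h2.mul_right (h2.mul_right hc)
    · simp only [N_t] at *
      obtain ⟨z, rfl⟩ := he
      have hc : IsCoprime x z := gcd_of_rep hp (a := 2) (b := 27) (by linarith)
      by_cases hx2 : (2 : ℤ) ∣ x
      · obtain ⟨u, rfl⟩ := hx2
        refine ⟨1, by simp, u, z, by linarith, ?_⟩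
        rw [← Int.isCoprime_iff_gcd_eq_one]
        exact hc.of_mul_left_right
      · refine ⟨4, by simp, x, 2 * z, by linarith, ?_⟩
        rw [← Int.isCoprime_iff_gcd_eq_one]
        have h2 : IsCoprime x 2 := ((Prime.coprime_iff_not_dvd Int.prime_two).2 hx2).symm
        exact h2.mul_right hc

lemma not_Q {p : ℕ} (hp : p.Prime) (h6 : ¬ Nat.Coprime p 6) : p ∉ QSet := by
  rintro ⟨-, h2, j, hj, x, y, h, hc⟩
  rw [cop6] at h6
  have h3 : p = 3 := by
    have h3 : 3 ∣ p := by
      rw [Nat.odd_iff] at h2; by_contra h3; exact h6 ⟨by omega, h3⟩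
    exact ((Nat.prime_dvd_prime_iff_eq Nat.prime_three hp).1 h3).symm
  subst h3
  simp only [Set.mem_insert_iff, Set.mem_singleton_iff] at hj
  have hx : (3 : ℤ) ∣ 8 * x ^ 2 := by
    rcases hj with rfl | rfl | rfl <;> omega
  rw [dvd_mul_sq Int.prime_three (by norm_num)] at hx
  obtain ⟨z, rfl⟩ := hx
  rw [mul_pow] at h
  rcases hj with rfl | rfl | rfl <;> omega

lemma isSq {p : ℕ} (hp : p.Prime) (h6 : Nat.Coprime p 6) :
    (∃ a, N a = p) ↔ jacobiSym (-6) p = 1 := by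
  have : Fact p.Prime := ⟨hp⟩
  have hpz : Prime (p : ℤ) := Nat.prime_iff_prime_int.1 hp
  have h0 : ((-6 : ℤ) : ZMod p) ≠ 0 := by
    rw [Ne, ZMod.intCast_zmod_eq_zero_iff_dvd, Int.dvd_neg]
    intro h
    have h : p ∣ 6 := by exact_mod_cast h
    have h1 := Nat.dvd_gcd dvd_rfl h
    rw [h6] at h1
    exact hp.one_lt.ne' (Nat.dvd_one.1 h1)
  rw [← jacobiSym.legendreSym.to_jacobiSym, legendreSym.eq_one_iff p h0]
  constructor
  · rintro ⟨a, ha⟩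
    have hy : ¬ (p : ℤ) ∣ a.y := by
      intro hy
      obtain ⟨b, rfl⟩ := dvd_of_dvd_y hpz (prime_ge hp h6) (by rw [ha]) hy
      rw [N_sc] at ha
      have : (p : ℤ) * N b = 1 := mul_left_cancel₀ hpz.ne_zero (by linarith)
      exact hpz.not_isUnit (IsUnit.of_mul_eq_one _ this)
    obtain ⟨b, hb⟩ := sq_of_dvd hpz (by rw [ha]) hy
    rw [← ZMod.intCast_zmod_eq_zero_iff_dvd] at hb
    refine ⟨(b : ZMod p), ?_⟩
    push_cast at *
    linear_combination -hb
  · rintro ⟨r, hr⟩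
    obtain ⟨b, rfl⟩ := ZMod.intCast_surjective r
    apply exists_of_sq (b := b) (by exact_mod_cast hp.pos)
    rw [← ZMod.intCast_zmod_eq_zero_iff_dvd]
    push_cast at *
    linear_combination -hr

lemma psi_eq {p : ℕ} (h6 : Nat.Coprime p 6) : psi24 (p : ZMod 24) = jacobiSym (-6) p := by
  rw [cop6] at h6
  rw [jacobiSym.mod_right _ (Nat.odd_iff.2 (by omega : p % 2 = 1)), psi24_apply, ← ZMod.natCast_mod,
    show 4 * (-6 : ℤ).natAbs = 24 from rfl]
  have : p % 24 = 1 ∨ p % 24 = 5 ∨ p % 24 = 7 ∨ p % 24 = 11 ∨ p % 24 = 13 ∨ p % 24 = 17 ∨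
    p % 24 = 19 ∨ p % 24 = 23 := by omega
  rcases this with h | h | h | h | h | h | h | h <;> rw [h]
  · rw [show tab24 ((1 : ℕ) : ZMod 24) = 1 by decide]; norm_num
  · rw [show tab24 ((5 : ℕ) : ZMod 24) = 1 by decide]; norm_num
  · rw [show tab24 ((7 : ℕ) : ZMod 24) = 1 by decide]; norm_num
  · rw [show tab24 ((11 : ℕ) : ZMod 24) = 1 by decide]; norm_num
  · rw [show tab24 ((13 : ℕ) : ZMod 24) = -1 by decide]; norm_num
  · rw [show tab24 ((17 : ℕ) : ZMod 24) = -1 by decide]; norm_num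
  · rw [show tab24 ((19 : ℕ) : ZMod 24) = -1 by decide]; norm_num
  · rw [show tab24 ((23 : ℕ) : ZMod 24) = -1 by decide]; norm_num

lemma S_prime {p : ℕ} (hp : p.Prime) (h6 : Nat.Coprime p 6) {π : El} (hπ : N π = p) :
    S p = {π, sc (-1) π, conj π, sc (-1) (conj π)} := by
  have hpz : Prime (p : ℤ) := Nat.prime_iff_prime_int.1 hp
  ext a
  simp only [mem_S, mem_insert, mem_singleton]
  constructor
  · intro ha
    have key : ∀ ρ b, N ρ = p → a = ρ * b → a = ρ ∨ a = sc (-1) ρ := by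
      rintro ρ b hρ rfl
      rw [N_mul, hρ] at ha
      rcases N_eq_one (mul_left_cancel₀ hpz.ne_zero (ha.trans (mul_one _).symm)) with rfl | rfl
      · left; rw [mul_one]
      · right; rw [mul_comm, sc_one_mul]
    obtain ⟨b, hb | hb⟩ := div_prime hpz (prime_ge hp h6) hπ (a := a) (by rw [ha])
    · have := key _ _ hπ hb; tauto
    · have := key (conj π) _ (by rw [N_conj, hπ]) hb; tauto
  · rintro (rfl | rfl | rfl | rfl) <;> simp [N_sc, N_conj, hπ]

lemma w_conj (a : El) : w (conj a) = w a := by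
  unfold w; simp only [e_conj, neg_eq_zero]

lemma w_neg (a : El) : w (sc (-1) a) = w a := by
  unfold w; simp only [e_neg]

lemma av_prime {p : ℕ} (hp : p.Prime) (h6 : Nat.Coprime p 6) {π : El} (hπ : N π = p) :
    av p = 2 * w π ∧ (p ∈ QSet ↔ e π = 0) := by
  have hpz : Prime (p : ℤ) := Nat.prime_iff_prime_int.1 hp
  have h23 := (cop6 p).1 h6
  have h2z : ¬ (2 : ℤ) ∣ p := by omega
  have h3z : ¬ (3 : ℤ) ∣ p := by omega
  have hS := S_prime hp h6 hπ
  constructor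
  · have hxy : π.x ≠ 0 ∧ π.y ≠ 0 := by
      obtain ⟨_ | _, x, y⟩ := π <;> simp only [N_f, N_t] at * <;> constructor <;> rintro rfl
      · omega
      · exact hpz.irreducible.not_isSquare ⟨x, by rw [← hπ]; ring⟩
      · omega
      · omega
    unfold av
    rw [if_pos h6, hS, sum_insert, sum_insert, sum_insert, sum_singleton, w_neg, w_neg, w_conj]
    · ring
    · simp only [mem_singleton, sc, conj, El.mk.injEq]; omega
    · simp only [mem_insert, mem_singleton, sc, conj, El.mk.injEq]; omega
    · simp only [mem_insert, mem_singleton, sc, conj, El.ext_iff]; omega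
  · rw [mem_Q hp h6]
    constructor
    · rintro ⟨a, ha, he⟩
      rw [← mem_S, hS] at ha
      simp only [mem_insert, mem_singleton] at ha
      rcases ha with rfl | rfl | rfl | rfl
      · exact he
      · rwa [e_neg] at he
      · rwa [e_conj, neg_eq_zero] at he
      · rwa [e_neg, e_conj, neg_eq_zero] at he
    · intro h; exact ⟨π, hπ, h⟩

open Classical in
lemma key_id {p : ℕ} (hp : p.Prime) : 3 * (if p ∈ QSet then (1 : ℝ) else 0) =
    av p + (((1 : MulChar (ZMod 24) ℤ) (p : ZMod 24) : ℝ) + (psi24 (p : ZMod 24) : ℝ)) / 2 := by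
  by_cases h6 : Nat.Coprime p 6
  · have hu : IsUnit (p : ZMod 24) := by
      rw [ZMod.isUnit_iff_coprime, show 24 = 2 ^ 2 * 6 from rfl, Nat.coprime_mul_iff_right]
      refine ⟨Nat.Coprime.pow_right 2 ?_, h6⟩
      rw [Nat.coprime_comm, Nat.Prime.coprime_iff_not_dvd Nat.prime_two]
      exact ((cop6 p).1 h6).1
    rw [MulChar.one_apply hu, psi_eq h6]
    by_cases hπ : ∃ a, N a = p
    · rw [(isSq hp h6).1 hπ]
      obtain ⟨π, hπ⟩ := hπ
      obtain ⟨h1, h2⟩ := av_prime hp h6 hπ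
      rw [h1, w]
      simp only [h2]
      split_ifs <;> norm_num
    · have h1 : jacobiSym (-6) p = -1 := by
        have := jacobiSym.trichotomy (-6) p
        have h3 : jacobiSym (-6) p ≠ 0 := by
          apply jacobiSym.ne_zero
          rw [Nat.coprime_comm] at h6
          simpa [Int.gcd] using h6
        rw [isSq hp h6] at hπ
        tauto
      have h2 : S p = ∅ := by
        rw [eq_empty_iff_forall_notMem]
        intro a ha
        exact hπ ⟨a, mem_S.1 ha⟩
      have h3 : p ∉ QSet := by
        rw [mem_Q hp h6]; rintro ⟨a, ha, -⟩; exact hπ ⟨a, ha⟩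
      rw [h1, if_neg h3, av, h2]; simp
  · have hu : ¬ IsUnit (p : ZMod 24) := by
      rw [ZMod.isUnit_iff_coprime]
      intro h
      exact h6 (Nat.Coprime.coprime_dvd_right (by norm_num) h)
    rw [if_neg (not_Q hp h6), MulChar.map_nonunit _ hu, MulChar.map_nonunit _ hu, av, if_neg h6]
    simp

end El

lemma fin_lim (F T P : ℝ → ℝ) (l K A B : ℝ) (hF : ∀ s, 1 < s → 0 < F s)
    (hlip : ∀ s, 1 < s → s < 2 → |F s - l| ≤ K * (s - 1)) (hT : ∀ s, 1 < s → 0 ≤ T s)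
    (h1 : ∀ᶠ s in 𝓝[>] (1 : ℝ), |P s + Real.log (s - 1)| ≤ A)
    (h2 : ∀ᶠ s in 𝓝[>] (1 : ℝ), |3 * T s - Real.log (F s) + Real.log (s - 1) / 2| ≤ B) :
    Tendsto (fun s => T s / P s) (𝓝[>] (1 : ℝ)) (𝓝 (1 / 6)) := by
  have hs1 : ∀ᶠ s in 𝓝[>] (1 : ℝ), 1 < s := eventually_mem_nhdsWithin
  have hs2 : ∀ᶠ s in 𝓝[>] (1 : ℝ), s < 2 := nhdsWithin_le_nhds (eventually_lt_nhds (by norm_num))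
  have hsub : Tendsto (fun s : ℝ => s - 1) (𝓝[>] (1 : ℝ)) (𝓝 0) := by
    have : Tendsto (fun s : ℝ => s - 1) (𝓝 1) (𝓝 (1 - 1)) := tendsto_id.sub_const 1
    rw [sub_self] at this
    exact this.mono_left nhdsWithin_le_nhds
  have hsub2 : Tendsto (fun s : ℝ => s - 1) (𝓝[>] (1 : ℝ)) (𝓝[>] 0) := by
    refine tendsto_nhdsWithin_iff.2 ⟨hsub, ?_⟩
    filter_upwards [hs1] with s hs
    simpa using hs
  have hlog : Tendsto (fun s : ℝ => Real.log (s - 1)) (𝓝[>] (1 : ℝ)) atBot :=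
    Real.tendsto_log_nhdsGT_zero.comp hsub2
  have hFl : Tendsto F (𝓝[>] (1 : ℝ)) (𝓝 l) := by
    rw [tendsto_iff_norm_sub_tendsto_zero]
    refine squeeze_zero' (g := fun s => K * (s - 1)) (Eventually.of_forall fun s => norm_nonneg _) ?_ ?_
    · filter_upwards [hs1, hs2] with s a b using hlip s a b
    · simpa using hsub.const_mul K
  have hl0 : 0 ≤ l := ge_of_tendsto hFl (by filter_upwards [hs1] with s hs using (hF s hs).le)
  have hl : l ≠ 0 := by
    rintro rfl
    obtain ⟨s, hs, ht, hb, hL⟩ := (hs1.and (hs2.and (h2.and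
      (hlog.eventually (eventually_lt_atBot (-2 * (B + |Real.log K|) - 1)))))).exists
    have h3 := hlip s hs ht
    have h4 := hF s hs
    rw [sub_zero, abs_of_pos h4] at h3
    have hK : 0 < K := by
      by_contra hK
      push Not at hK
      nlinarith
    have h5 := Real.log_le_log h4 h3
    rw [Real.log_mul hK.ne' (by linarith)] at h5
    have h6 := hT s hs
    have h7 := le_abs_self (Real.log K)
    rw [abs_le] at hb
    linarith
  have hlF : Tendsto (fun s => |Real.log (F s)|) (𝓝[>] (1 : ℝ)) (𝓝 |Real.log l|) := (hFl.log hl).abs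
  have hlF2 := hlF.eventually (eventually_lt_nhds (lt_add_one |Real.log l|))
  have hP : Tendsto P (𝓝[>] (1 : ℝ)) atTop := by
    refine tendsto_atTop_mono' _ (f₁ := fun s => -Real.log (s - 1) - A) ?_ ?_
    · filter_upwards [h1] with s hs
      rw [abs_le] at hs; linarith
    · exact tendsto_atTop_add_const_right _ _ (tendsto_neg_atBot_atTop.comp hlog)
  rw [tendsto_iff_norm_sub_tendsto_zero]
  refine squeeze_zero' (g := fun s => (A + B + (|Real.log l| + 1)) / P s)
    (Eventually.of_forall fun s => norm_nonneg _) ?_ (hP.const_div_atTop _)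
  filter_upwards [h1, h2, hlF2, hP.eventually_gt_atTop 0] with s a b c d
  rw [Real.norm_eq_abs, show T s / P s - 1 / 6 = (T s - P s / 6) / P s by field_simp, abs_div, abs_of_pos d]
  gcongr
  rw [abs_le] at a b ⊢
  rw [abs_lt] at c
  constructor <;> linarith

lemma good_one : Good (fun n : ℕ => ((1 : MulChar (ZMod 24) ℤ) (n : ZMod 24) : ℝ)) :=
  good_char 1 (by
    intro a
    by_cases h : IsUnit a
    · rw [MulChar.one_apply h]; simp
    · rw [MulChar.map_nonunit _ h]; simp)

lemma good_psi : Good (fun n : ℕ => (psi24 (n : ZMod 24) : ℝ)) :=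
  good_char psi24 (by
    intro a
    rw [psi24_apply]
    revert a
    decide)

lemma Good.sumP {f : ℕ → ℝ} (hf : Good f) {s : ℝ} (hs : 1 < s) :
    Summable fun p : Nat.Primes => f p * (p : ℝ) ^ (-s) :=
  (hf.summable hs).of_norm.comp_injective (i := fun p : Nat.Primes => (p : ℕ)) Subtype.val_injective

lemma one_val {p : ℕ} (hp : p.Prime) : ((1 : MulChar (ZMod 24) ℤ) (p : ZMod 24) : ℝ) =
    if p = 2 ∨ p = 3 then 0 else 1 := by
  split_ifs with h
  · rcases h with rfl | rfl
    · rw [MulChar.map_nonunit _ (by decide)]; simp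
    · rw [MulChar.map_nonunit _ (by decide)]; simp
  · rw [MulChar.one_apply]
    · simp
    · push Not at h
      rw [ZMod.isUnit_iff_coprime, show 24 = 2 ^ 3 * 3 from rfl, Nat.coprime_mul_iff_right]
      exact ⟨Nat.Coprime.pow_right 3 ((Nat.coprime_primes hp Nat.prime_two).2 h.1),
        (Nat.coprime_primes hp Nat.prime_three).2 h.2⟩

lemma P_bound {s : ℝ} (hs : 1 < s) : |(∑' p : {q : ℕ // q.Prime}, ((p : ℕ) : ℝ) ^ (-s)) -
    ∑' p : Nat.Primes, ((1 : MulChar (ZMod 24) ℤ) ((p : ℕ) : ZMod 24) : ℝ) * (p : ℝ) ^ (-s)| ≤ 2 := by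
  have h1 : Summable fun p : Nat.Primes => (p : ℝ) ^ (-s) :=
    Nat.Primes.summable_rpow.2 (by linarith)
  have h2 := good_one.sumP hs
  rw [show (∑' p : {q : ℕ // q.Prime}, ((p : ℕ) : ℝ) ^ (-s)) = ∑' p : Nat.Primes, (p : ℝ) ^ (-s) from rfl,
    ← h1.tsum_sub h2]
  have h3 : ∀ p ∉ ({⟨2, Nat.prime_two⟩, ⟨3, Nat.prime_three⟩} : Finset Nat.Primes),
      (p : ℝ) ^ (-s) - ((1 : MulChar (ZMod 24) ℤ) ((p : ℕ) : ZMod 24) : ℝ) * (p : ℝ) ^ (-s) = 0 := by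
    intro p hp
    rw [one_val p.2, if_neg]
    · ring
    · rintro (h | h)
      · exact hp (Finset.mem_insert.2 (Or.inl (Subtype.ext h)))
      · exact hp (Finset.mem_insert.2 (Or.inr (Finset.mem_singleton.2 (Subtype.ext h))))
  rw [tsum_eq_sum h3]
  refine (Finset.abs_sum_le_sum_abs _ _).trans ((Finset.sum_le_card_nsmul _ _ 1 ?_).trans ?_)
  · intro p _
    have h5 : (0 : ℝ) ≤ (p : ℝ) ^ (-s) := Real.rpow_nonneg (Nat.cast_nonneg _) _
    have h6 : (p : ℝ) ^ (-s) ≤ 1 :=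
      Real.rpow_le_one_of_one_le_of_nonpos (by exact_mod_cast p.2.one_lt.le) (by linarith)
    rw [one_val p.2, abs_le]
    split_ifs <;> constructor <;> linarith
  · rw [nsmul_eq_mul, mul_one]
    exact_mod_cast Finset.card_le_two

open Classical in
lemma T_eq (s : ℝ) : (∑' p : QSet, ((p : ℕ) : ℝ) ^ (-s)) =
    ∑' p : Nat.Primes, (if (p : ℕ) ∈ QSet then (1 : ℝ) else 0) * (p : ℝ) ^ (-s) := by
  rw [tsum_subtype QSet (fun n : ℕ => (n : ℝ) ^ (-s))]
  refine Eq.trans ?_ (tsum_subtype {p : ℕ | p.Prime}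
    (fun n : ℕ => (if n ∈ QSet then (1 : ℝ) else 0) * (n : ℝ) ^ (-s))).symm
  congr 1
  ext n
  by_cases h : n ∈ QSet
  · have h2 : n ∈ {p : ℕ | p.Prime} := h.1
    rw [Set.indicator_of_mem h, Set.indicator_of_mem h2, if_pos h, one_mul]
  · rw [Set.indicator_of_notMem h]
    by_cases h2 : n ∈ {p : ℕ | p.Prime}
    · rw [Set.indicator_of_mem h2, if_neg h, zero_mul]
    · rw [Set.indicator_of_notMem h2]

lemma three_T {s : ℝ} (hs : 1 < s) : 3 * (∑' p : QSet, ((p : ℕ) : ℝ) ^ (-s)) =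
    ∑' p : Nat.Primes, El.av p * (p : ℝ) ^ (-s) +
    ((∑' p : Nat.Primes, ((1 : MulChar (ZMod 24) ℤ) ((p : ℕ) : ZMod 24) : ℝ) * (p : ℝ) ^ (-s)) +
      ∑' p : Nat.Primes, (psi24 ((p : ℕ) : ZMod 24) : ℝ) * (p : ℝ) ^ (-s)) / 2 := by
  have h1 := good_one.sumP hs
  have h2 := good_psi.sumP hs
  have h3 := El.good_av.sumP hs
  rw [T_eq, ← tsum_mul_left, ← h1.tsum_add h2, div_eq_mul_inv, ← tsum_mul_right,
    ← h3.tsum_add ((h1.add h2).mul_right _)]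
  refine tsum_congr fun p => ?_
  rw [← mul_assoc, El.key_id p.2]
  ring

theorem stmt_17 :
    Tendsto
      (fun s : ℝ =>
        (∑' p : QSet, ((p : ℕ) : ℝ) ^ (-s)) /
          (∑' p : {q : ℕ // q.Prime}, ((p : ℕ) : ℝ) ^ (-s)))
      (𝓝[>] (1 : ℝ)) (𝓝 (1 / 6)) := by
  obtain ⟨l, K, hlip⟩ := lip El.av El.good_av.zero (fun s hs => El.good_av.summable hs) 3 (by norm_num)
    El.av_partial
  obtain ⟨Ca, ha⟩ := El.good_av.log
  obtain ⟨Co, ho⟩ := good_one.log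
  obtain ⟨Cp, hp⟩ := good_psi.log
  obtain ⟨Do, ho2⟩ := one24_log
  obtain ⟨Dp, hp2⟩ := psi24_log
  have hs1 : ∀ᶠ s in 𝓝[>] (1 : ℝ), 1 < s := eventually_mem_nhdsWithin
  refine fin_lim (FF El.av) _ _ l K (2 + Co + Do) (Ca + Co + Cp + Do + Dp)
    (fun s hs => (ha s hs).1) hlip ?_ ?_ ?_
  · intro s hs
    exact tsum_nonneg fun p => Real.rpow_nonneg (Nat.cast_nonneg _) _
  · filter_upwards [hs1, ho2] with s hs h
    have h1 := P_bound hs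
    have h2 := (ho s hs).2
    rw [abs_le] at h h1 h2 ⊢
    constructor <;> linarith
  · filter_upwards [hs1, ho2, hp2] with s hs h h'
    rw [three_T hs]
    have h1 := (ha s hs).2
    have h2 := (ho s hs).2
    have h3 := (hp s hs).2
    rw [abs_le] at h h' h1 h2 h3 ⊢
    constructor <;> linarith
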